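/- For any positive integers r and n, the quotient of Hom_+(C_{2r+1}, K_n) by the Z_2-action induced from the reflection of C_{2r+1} is homotopy equivalent to: a wedge of 2^{n−1} spheres S^{nk−1} if 2r + 1 = 3k; and the join S^{kn/2−1} * RP^{kn/2−1} if 2r + 1 = 3k ± 1 (in which case k is such that kn is even in the relevant cases). -/

import Mathlib

open Finset

noncomputable section
namespace Lovasz




structure Graph where
  V : Type
  fintypeV : Fintype V
  adj : V → V → Prop
  symm : ∀ {x y : V}, adj x y → adj y x

attribute [instance] Graph.fintypeV

def Graph.Loopless (G : Graph) : Prop := ∀ v : G.V, ¬ G.adj v v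

def GraphHom (G H : Graph) : Type :=
  {f : G.V → H.V // ∀ x y : G.V, G.adj x y → H.adj (f x) (f y)}

@[reducible] def completeGraph (n : ℕ) : Graph where
  V := Fin n
  fintypeV := inferInstance
  adj x y := x ≠ y
  symm h := h.symm

def chromaticNumber (G : Graph) : ℕ :=
  sInf {n : ℕ | Nonempty (GraphHom G (completeGraph n))}

@[reducible] def oddCycle (r : ℕ) : Graph where
  V := ZMod (2 * r + 1)
  fintypeV := inferInstance
  adj x y := x = y + 1 ∨ y = x + 1
  symm h := h.symm

/-- The cycle with `m` vertices (trivial graph for `m = 0`). -/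
@[reducible] def cycleGraph : ℕ → Graph
  | 0 => ⟨Empty, inferInstance, fun _ _ => False, fun h => h⟩
  | (n+1) =>
    { V := ZMod (n+1)
      fintypeV := inferInstance
      adj := fun x y => x = y + 1 ∨ y = x + 1
      symm := fun h => h.symm }

/-- The geometric realization of the polyhedral complex `Hom(G,H)`: the space of functions
assigning to each vertex of `G` a probability distribution on `V(H)`, such that any choice of
vertices from the supports yields a graph homomorphism. -/
abbrev HomComplex (G H : Graph) : Type :=
  {f : G.V → H.V → ℝ //
    (∀ v w, 0 ≤ f v w) ∧ (∀ v, ∑ w, f v w = 1) ∧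
    ∀ x y : G.V, G.adj x y → ∀ a b : H.V, f x a ≠ 0 → f y b ≠ 0 → H.adj a b}

/-- The geometric realization of the simplicial complex `Hom₊(G,H)`. -/
abbrev HomPlus (G H : Graph) : Type :=
  {f : G.V → H.V → ℝ //
    (∀ v w, 0 ≤ f v w) ∧ (∑ v, ∑ w, f v w = 1) ∧
    ∀ x y : G.V, G.adj x y → ∀ a b : H.V, f x a ≠ 0 → f y b ≠ 0 → H.adj a b}

/-- The geometric realization of the independence complex `Ind(G)`. -/
abbrev IndSpace (G : Graph) : Type :=
  {f : G.V → ℝ //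
    (∀ v, 0 ≤ f v) ∧ (∑ v, f v = 1) ∧
    ∀ x y : G.V, G.adj x y → f x = 0 ∨ f y = 0}

/-- The map `Hom(G',H) → Hom(G,H)` induced by a graph homomorphism `ι : G → G'`. -/
def precompHom {G G' : Graph} (ι : GraphHom G G') (H : Graph) :
    C(HomComplex G' H, HomComplex G H) where
  toFun f := ⟨fun v w => f.1 (ι.1 v) w,
    fun v w => f.2.1 (ι.1 v) w,
    fun v => f.2.2.1 (ι.1 v),
    fun x y h a b ha hb => f.2.2.2 (ι.1 x) (ι.1 y) (ι.2 x y h) a b ha hb⟩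
  continuous_toFun := by
    apply Continuous.subtype_mk
    apply continuous_pi; intro v
    apply continuous_pi; intro w
    exact (continuous_apply w).comp ((continuous_apply (ι.1 v)).comp continuous_subtype_val)

/-- The map `Hom₊(G',H) → Hom₊(G,H)` induced by an *invertible* graph homomorphism is only used
for involutions, where precomposition preserves the normalization; for bijective `ι` the total
sum is preserved. -/
def precompHomPlus {G : Graph} (ι : GraphHom G G) (hbij : Function.Bijective ι.1) (H : Graph) :
    C(HomPlus G H, HomPlus G H) where
  toFun f := ⟨fun v w => f.1 (ι.1 v) w,
    fun v w => f.2.1 (ι.1 v) w,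
    by
      show ∑ v, ∑ w, f.1 (ι.1 v) w = 1
      have h2 : ∑ v, ∑ w, f.1 (ι.1 v) w = ∑ v, ∑ w, f.1 v w :=
        Fintype.sum_bijective ι.1 hbij _ _ (fun v => rfl)
      rw [h2]; exact f.2.2.1,
    fun x y h a b ha hb => f.2.2.2 (ι.1 x) (ι.1 y) (ι.2 x y h) a b ha hb⟩
  continuous_toFun := by
    apply Continuous.subtype_mk
    apply continuous_pi; intro v
    apply continuous_pi; intro w
    exact (continuous_apply w).comp ((continuous_apply (ι.1 v)).comp continuous_subtype_val)

lemma precompHom_invol {G : Graph} (γ : GraphHom G G) (hγ : ∀ v, γ.1 (γ.1 v) = v) (H : Graph) :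
    ∀ f, precompHom γ H (precompHom γ H f) = f := by
  intro f
  apply Subtype.ext
  funext v w
  show f.1 (γ.1 (γ.1 v)) w = f.1 v w
  rw [hγ]

lemma precompHomPlus_invol {G : Graph} (γ : GraphHom G G) (hbij : Function.Bijective γ.1)
    (hγ : ∀ v, γ.1 (γ.1 v) = v) (H : Graph) :
    ∀ f, precompHomPlus γ hbij H (precompHomPlus γ hbij H f) = f := by
  intro f
  apply Subtype.ext
  funext v w
  show f.1 (γ.1 (γ.1 v)) w = f.1 v w
  rw [hγ]

/-- The reflection `x ↦ -x` of the odd cycle. -/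
def cycleReflect (r : ℕ) : GraphHom (oddCycle r) (oddCycle r) :=
  ⟨fun x => (-x : ZMod (2 * r + 1)), by
    intro x y h
    change (x : ZMod (2 * r + 1)) = y + 1 ∨ y = x + 1 at h
    change (-x : ZMod (2 * r + 1)) = -y + 1 ∨ (-y : ZMod (2 * r + 1)) = -x + 1
    rcases h with h | h
    · right; rw [h]; ring
    · left; rw [h]; ring⟩

lemma cycleReflect_invol (r : ℕ) : ∀ v, (cycleReflect r).1 ((cycleReflect r).1 v) = v :=
  fun v => neg_neg (v : ZMod (2 * r + 1))

lemma cycleReflect_bijective (r : ℕ) : Function.Bijective (cycleReflect r).1 :=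
  Function.Involutive.bijective (fun v => neg_neg (v : ZMod (2 * r + 1)))

open scoped Topology in
/-- `k`-connectedness (`k ≥ -1`): nonempty, path-connected (when `k ≥ 0`), and all homotopy
groups `π_i` vanish for `1 ≤ i ≤ k`. -/
def KConnected (k : ℤ) (X : Type) [TopologicalSpace X] : Prop :=
  Nonempty X ∧ ((0:ℤ) ≤ k → PathConnectedSpace X) ∧
    ∀ i : ℕ, 1 ≤ i → (i : ℤ) ≤ k → ∀ x : X, Subsingleton (HomotopyGroup (Fin i) X x)



/-- The orbit setoid of an involution. -/
def involutionSetoid {X : Type} [TopologicalSpace X] (τ : C(X, X)) (hτ : ∀ x, τ (τ x) = x) : Setoid X where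
  r x y := y = x ∨ y = τ x
  iseqv := by
    constructor
    · exact fun x => Or.inl rfl
    · rintro x y (rfl | rfl)
      · exact Or.inl rfl
      · exact Or.inr (hτ x).symm
    · rintro x y z (rfl | rfl) (h | h) <;> subst h
      · exact Or.inl rfl
      · exact Or.inr rfl
      · exact Or.inr rfl
      · exact Or.inl (hτ x)

/-- The quotient of a space by (the `ℤ/2`-action generated by) an involution. -/
abbrev Z2Quotient (X : Type) [TopologicalSpace X] (τ : C(X, X)) (hτ : ∀ x, τ (τ x) = x) : Type :=
  Quotient (involutionSetoid τ hτ)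

instance fact_one_le_two_ennreal' : Fact ((1 : ENNReal) ≤ 2) := ⟨one_le_two⟩

/-- The infinite-dimensional sphere: the unit sphere of `ℓ²(ℕ;ℝ)`, a model for `E ℤ/2 = S^∞`. -/
abbrev InfSphere : Type := (Metric.sphere (0 : lp (fun _ : ℕ => ℝ) 2) 1 : Set (lp (fun _ : ℕ => ℝ) 2))

/-- The antipodal involution of `S^∞`. -/
def infSphereNeg : C(InfSphere, InfSphere) where
  toFun x := ⟨-x.1, by
    have hx := x.2
    rw [Metric.mem_sphere, dist_zero_right] at hx ⊢
    rwa [norm_neg]⟩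
  continuous_toFun := by
    apply Continuous.subtype_mk
    exact continuous_subtype_val.neg

lemma infSphereNeg_invol : ∀ x, infSphereNeg (infSphereNeg x) = x := by
  intro x
  apply Subtype.ext
  show -(-x.1) = x.1
  exact neg_neg _

/-- `ℝP^∞`, as the quotient of `S^∞` by the antipodal action; a model for `B ℤ/2`. -/
abbrev RPinf : Type := Z2Quotient InfSphere infSphereNeg infSphereNeg_invol

/-- The map `X/ℤ₂ → ℝP^∞` induced by a `ℤ/2`-equivariant (classifying) map `X → S^∞`. -/
def classifyingQuotientMap {X : Type} [TopologicalSpace X] (τ : C(X, X)) (hτ : ∀ x, τ (τ x) = x)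
    (w : C(X, InfSphere)) (hw : ∀ x, w (τ x) = infSphereNeg (w x)) :
    C(Z2Quotient X τ hτ, RPinf) where
  toFun := Quotient.lift (fun x => (Quotient.mk (involutionSetoid infSphereNeg infSphereNeg_invol) (w x) : RPinf))
    (by
      rintro x y (rfl | rfl)
      · rfl
      · show Quotient.mk _ (w x) = Quotient.mk _ (w (τ x))
        rw [hw x]
        exact Quotient.sound (Or.inr rfl))
  continuous_toFun := by
    apply Continuous.quotient_lift
    exact continuous_quotient_mk'.comp w.continuous



/-- The `d`-dimensional sphere, as the unit sphere in `ℝ^{d+1}`. -/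
abbrev nSphere (d : ℕ) : Type :=
  (Metric.sphere (0 : EuclideanSpace ℝ (Fin (d+1))) 1 : Set (EuclideanSpace ℝ (Fin (d+1))))

/-- The antipodal involution of the `d`-sphere. -/
def nSphereNeg (d : ℕ) : C(nSphere d, nSphere d) where
  toFun x := ⟨-x.1, by
    have hx := x.2
    rw [Metric.mem_sphere, dist_zero_right] at hx ⊢
    rwa [norm_neg]⟩
  continuous_toFun := by
    apply Continuous.subtype_mk
    exact continuous_subtype_val.neg

lemma nSphereNeg_invol (d : ℕ) : ∀ x, nSphereNeg d (nSphereNeg d x) = x := by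
  intro x
  apply Subtype.ext
  show -(-x.1) = x.1
  exact neg_neg _

/-- A base point on the `d`-sphere. -/
def northPole (d : ℕ) : nSphere d :=
  ⟨EuclideanSpace.single (0 : Fin (d+1)) (1 : ℝ), by
    rw [Metric.mem_sphere, dist_zero_right, EuclideanSpace.norm_single]
    norm_num⟩

/-- The setoid gluing `m` spheres of dimension `d` at their base points. -/
def wedgeSetoid (m d : ℕ) : Setoid (Fin m × nSphere d) where
  r a b := a = b ∨ (a.2 = northPole d ∧ b.2 = northPole d)
  iseqv := by
    constructor
    · exact fun a => Or.inl rfl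
    · rintro a b (rfl | ⟨h1, h2⟩)
      · exact Or.inl rfl
      · exact Or.inr ⟨h2, h1⟩
    · rintro a b c (rfl | ⟨h1, h2⟩) (rfl | ⟨h3, h4⟩)
      · exact Or.inl rfl
      · exact Or.inr ⟨h3, h4⟩
      · exact Or.inr ⟨h1, h2⟩
      · exact Or.inr ⟨h1, h4⟩

/-- The wedge (one-point union) of `m` copies of the `d`-sphere. -/
abbrev WedgeOfSpheres (m d : ℕ) : Type := Quotient (wedgeSetoid m d)

/-- The setoid for the topological join `X * Y` on `X × Y × [0,1]`:
at time `0` collapse `Y`, at time `1` collapse `X`. -/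
def joinSetoid (X Y : Type) [TopologicalSpace X] [TopologicalSpace Y] :
    Setoid (X × Y × unitInterval) where
  r a b := a = b ∨ (a.2.2 = 0 ∧ b.2.2 = 0 ∧ a.1 = b.1) ∨ (a.2.2 = 1 ∧ b.2.2 = 1 ∧ a.2.1 = b.2.1)
  iseqv := by
    constructor
    · exact fun a => Or.inl rfl
    · rintro a b (rfl | ⟨h1, h2, h3⟩ | ⟨h1, h2, h3⟩)
      · exact Or.inl rfl
      · exact Or.inr (Or.inl ⟨h2, h1, h3.symm⟩)
      · exact Or.inr (Or.inr ⟨h2, h1, h3.symm⟩)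
    · rintro a b c (rfl | ⟨h1, h2, h3⟩ | ⟨h1, h2, h3⟩) (rfl | ⟨h4, h5, h6⟩ | ⟨h4, h5, h6⟩)
      · exact Or.inl rfl
      · exact Or.inr (Or.inl ⟨h4, h5, h6⟩)
      · exact Or.inr (Or.inr ⟨h4, h5, h6⟩)
      · exact Or.inr (Or.inl ⟨h1, h2, h3⟩)
      · exact Or.inr (Or.inl ⟨h1, h5, h3.trans h6⟩)
      · exact absurd (congrArg Subtype.val (h4.symm.trans h2))
          (by simp)
      · exact Or.inr (Or.inr ⟨h1, h2, h3⟩)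
      · exact absurd (congrArg Subtype.val (h2.symm.trans h4))
          (by simp)
      · exact Or.inr (Or.inr ⟨h1, h5, h3.trans h6⟩)

/-- The topological join `X * Y`. -/
abbrev TopJoin (X Y : Type) [TopologicalSpace X] [TopologicalSpace Y] : Type :=
  Quotient (joinSetoid X Y)

/-- A continuous map is a homotopy equivalence. -/
def IsHomotopyEquiv {X Y : Type} [TopologicalSpace X] [TopologicalSpace Y] (f : C(X, Y)) : Prop :=
  ∃ g : C(Y, X), (g.comp f).Homotopic (ContinuousMap.id X) ∧
    (f.comp g).Homotopic (ContinuousMap.id Y)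

/-- A `ℤ/2`-equivariant homotopy equivalence between spaces with involutions, where all maps and
homotopies are equivariant. -/
def IsZ2HomotopyEquiv {X Y : Type} [TopologicalSpace X] [TopologicalSpace Y]
    (τ : C(X, X)) (ρ : C(Y, Y)) : Prop :=
  ∃ (f : C(X, Y)) (g : C(Y, X)),
    (∀ x, f (τ x) = ρ (f x)) ∧ (∀ y, g (ρ y) = τ (g y)) ∧
    (∃ H : (g.comp f).Homotopy (ContinuousMap.id X), ∀ x t, H (t, τ x) = τ (H (t, x))) ∧
    (∃ K : (f.comp g).Homotopy (ContinuousMap.id Y), ∀ y t, K (t, ρ y) = ρ (K (t, y)))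

/-- Real projective `m`-space, as the quotient of `S^m` by the antipodal involution. -/
abbrev RPspace (m : ℕ) : Type :=
  Z2Quotient (nSphere m) (nSphereNeg m) (nSphereNeg_invol m)


/-- homotopies descend to quotients -/
theorem quotHE {X Y : Type} [TopologicalSpace X] [TopologicalSpace Y]
    (τ : C(X, X)) (hτ : ∀ x, τ (τ x) = x) (ρ : C(Y, Y)) (hρ : ∀ x, ρ (ρ x) = x)
    (h : IsZ2HomotopyEquiv τ ρ) :
    Nonempty (ContinuousMap.HomotopyEquiv (Z2Quotient X τ hτ) (Z2Quotient Y ρ hρ)) := by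
  obtain ⟨f, g, hf, hg, ⟨H, hH⟩, ⟨K, hK⟩⟩ := h
  let qm : ∀ {X Y : Type} [TopologicalSpace X] [TopologicalSpace Y]
    (τ : C(X, X)) (hτ : ∀ x, τ (τ x) = x) (ρ : C(Y, Y)) (hρ : ∀ x, ρ (ρ x) = x) (f : C(X, Y))
    (_ : ∀ x, f (τ x) = ρ (f x)), C(Z2Quotient X τ hτ, Z2Quotient Y ρ hρ) :=
    fun τ hτ ρ hρ f hf =>
    { toFun := Quotient.lift (fun x => Quotient.mk (involutionSetoid ρ hρ) (f x)) (by
        rintro x y (rfl | rfl)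
        · rfl
        · show Quotient.mk _ (f x) = Quotient.mk _ (f (τ x))
          rw [hf]
          exact Quotient.sound (Or.inr rfl))
      continuous_toFun := by
        apply Continuous.quotient_lift
        exact continuous_quotient_mk'.comp f.continuous }
  have hom : ∀ {X : Type} [TopologicalSpace X] (τ : C(X, X)) (hτ : ∀ x, τ (τ x) = x)
      (f : C(X, X)) (hf : ∀ x, f (τ x) = τ (f x)) (H : f.Homotopy (ContinuousMap.id X))
      (_ : ∀ x t, H (t, τ x) = τ (H (t, x))), (qm τ hτ τ hτ f hf).Homotopic (ContinuousMap.id _) := by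
    intro X _ τ hτ f hf H hH
    let c : C(X, C(unitInterval, Z2Quotient X τ hτ)) := ContinuousMap.curry
      ⟨fun p : X × unitInterval => Quotient.mk (involutionSetoid τ hτ) (H (p.2, p.1)), by
        apply continuous_quotient_mk'.comp
        fun_prop⟩
    let d : Z2Quotient X τ hτ → C(unitInterval, Z2Quotient X τ hτ) := Quotient.lift c (by
        rintro x y (rfl | rfl)
        · rfl
        · ext t
          show Quotient.mk _ (H (t, x)) = Quotient.mk _ (H (t, τ x))
          rw [hH]
          exact Quotient.sound (Or.inr rfl))
    have hd : Continuous d := Continuous.quotient_lift c.continuous _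
    refine ⟨⟨⟨fun p => d p.2 p.1, ?_⟩, ?_, ?_⟩⟩
    · fun_prop
    · intro x
      induction x using Quotient.inductionOn with
      | _ x =>
        show Quotient.mk _ (H (0, x)) = Quotient.mk _ (f x)
        rw [H.apply_zero]
    · intro x
      induction x using Quotient.inductionOn with
      | _ x =>
        show Quotient.mk _ (H (1, x)) = Quotient.mk _ x
        rw [H.apply_one]; rfl
  refine ⟨⟨qm τ hτ ρ hρ f hf, qm ρ hρ τ hτ g hg, ?_, ?_⟩⟩
  · have := hom τ hτ (g.comp f) (fun x => by simp [hf, hg]) H hH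
    convert this using 1
    ext x
    induction x using Quotient.inductionOn with
    | _ x => rfl
  · have := hom ρ hρ (f.comp g) (fun x => by simp [hf, hg]) K hK
    convert this using 1
    ext x
    induction x using Quotient.inductionOn with
    | _ x => rfl

/-- pointed spaces with involution -/
structure ZC where
  X : Type
  [top : TopologicalSpace X]
  z : X
  τ : X → X
  cτ : Continuous τ
  invol : ∀ x, τ (τ x) = x
  τz : τ z = z

attribute [instance] ZC.top

def ZC.pow (A : ZC) (n : ℕ) : ZC where
  X := Fin n → A.X
  z := fun _ => A.z
  τ := fun x i => A.τ (x i)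
  cτ := by have := A.cτ; fun_prop
  invol := fun x => funext fun i => A.invol (x i)
  τz := funext fun i => A.τz

abbrev ZC.nz (A : ZC) : Type := {x : A.X // x ≠ A.z}

def ZC.nτ (A : ZC) : C(A.nz, A.nz) where
  toFun x := ⟨A.τ x.1, fun h => x.2 (by rw [← A.invol x.1, h, A.τz])⟩
  continuous_toFun := by
    apply Continuous.subtype_mk
    exact A.cτ.comp continuous_subtype_val

lemma ZC.nτ_invol (A : ZC) : ∀ x, A.nτ (A.nτ x) = x := fun x => Subtype.ext (A.invol x.1)

abbrev ZC.Q (A : ZC) : Type := Z2Quotient A.nz A.nτ A.nτ_invol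

def Defo (A : ZC) (f : A.X → A.X) : Prop :=
  ∃ H : unitInterval × A.X → A.X, Continuous H ∧ (∀ x, H (0, x) = x) ∧ (∀ x, H (1, x) = f x) ∧
    (∀ l x, H (l, A.τ x) = A.τ (H (l, x))) ∧ (∀ l x, H (l, x) = A.z → x = A.z)

def CE (A B : ZC) : Prop :=
  ∃ (f : A.X → B.X) (g : B.X → A.X), Continuous f ∧ Continuous g ∧
    (∀ x, f (A.τ x) = B.τ (f x)) ∧ (∀ x, g (B.τ x) = A.τ (g x)) ∧
    (∀ x, f x = B.z → x = A.z) ∧ (∀ x, g x = A.z → x = B.z) ∧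
    Defo A (g ∘ f) ∧ Defo B (f ∘ g)

lemma Defo.refl (A : ZC) (f : A.X → A.X) (hf : ∀ x, f x = x) : Defo A f :=
  ⟨fun p => p.2, continuous_snd, fun _ => rfl, fun x => (hf x).symm, fun _ _ => rfl, fun _ _ h => h⟩

lemma Defo.pow {A : ZC} {f : A.X → A.X} (h : Defo A f) (n : ℕ) :
    Defo (A.pow n) (fun x i => f (x i)) := by
  obtain ⟨H, h1, h2, h3, h4, h5⟩ := h
  refine ⟨fun p i => H (p.1, p.2 i), ?_, ?_, ?_, ?_, ?_⟩
  · refine continuous_pi fun i => h1.comp ?_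
    exact continuous_fst.prodMk ((continuous_apply i).comp continuous_snd)
  · exact fun x => funext fun i => h2 _
  · exact fun x => funext fun i => h3 _
  · exact fun l x => funext fun i => h4 _ _
  · exact fun l x hx => funext fun i => h5 l _ (congrFun hx i)

lemma CE.pow {A B : ZC} (h : CE A B) (n : ℕ) : CE (A.pow n) (B.pow n) := by
  obtain ⟨f, g, h1, h2, h3, h4, h5, h6, h7, h8⟩ := h
  refine ⟨fun x i => f (x i), fun x i => g (x i), ?_, ?_, ?_, ?_, ?_, ?_, h7.pow n, h8.pow n⟩
  · exact continuous_pi fun i => h1.comp (continuous_apply i)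
  · exact continuous_pi fun i => h2.comp (continuous_apply i)
  · exact fun x => funext fun i => h3 _
  · exact fun x => funext fun i => h4 _
  · exact fun x hx => funext fun i => h5 _ (congrFun hx i)
  · exact fun x hx => funext fun i => h6 _ (congrFun hx i)

lemma Defo.homotopy {A : ZC} {f : A.X → A.X} (h : Defo A f) (F : C(A.nz, A.nz))
    (hF : ∀ x, (F x).1 = f x.1) : ∃ H : F.Homotopy (ContinuousMap.id A.nz),
      ∀ x t, H (t, A.nτ x) = A.nτ (H (t, x)) := by
  obtain ⟨H, h1, h2, h3, h4, h5⟩ := h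
  refine ⟨⟨⟨fun p => ⟨H (unitInterval.symm p.1, p.2.1), fun hx => p.2.2 (h5 _ _ hx)⟩, ?_⟩, ?_, ?_⟩, ?_⟩
  · apply Continuous.subtype_mk
    apply h1.comp
    fun_prop
  · intro x
    apply Subtype.ext
    simp [h3, hF]
  · intro x
    apply Subtype.ext
    simp [h2]
  · intro x t
    apply Subtype.ext
    exact h4 _ _

lemma CE.quot {A B : ZC} (h : CE A B) : Nonempty (ContinuousMap.HomotopyEquiv A.Q B.Q) := by
  obtain ⟨f, g, h1, h2, h3, h4, h5, h6, h7, h8⟩ := h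
  apply quotHE
  refine ⟨⟨fun x => ⟨f x.1, fun hx => x.2 (h5 _ hx)⟩, ?_⟩,
    ⟨fun x => ⟨g x.1, fun hx => x.2 (h6 _ hx)⟩, ?_⟩, ?_, ?_, h7.homotopy _ fun _ => rfl,
    h8.homotopy _ fun _ => rfl⟩
  · exact (h1.comp continuous_subtype_val).subtype_mk _
  · exact (h2.comp continuous_subtype_val).subtype_mk _
  · exact fun x => Subtype.ext (h3 _)
  · exact fun x => Subtype.ext (h4 _)


abbrev KZs (r : ℕ) : Type := {f : ZMod (2 * r + 1) → ℝ // (∀ v, 0 ≤ f v) ∧ ∀ v, f v = 0 ∨ f (v + 1) = 0}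

def KZ (r : ℕ) : ZC where
  X := KZs r
  z := ⟨fun _ => 0, fun _ => le_rfl, fun _ => Or.inl rfl⟩
  τ := fun f => ⟨fun v => f.1 (-v), fun v => f.2.1 _, fun v => by
    have := f.2.2 (-(v+1))
    rw [show -(v+1) + 1 = -v by ring] at this
    exact this.symm⟩
  cτ := by
    apply Continuous.subtype_mk
    exact continuous_pi fun v => (continuous_apply (-v)).comp continuous_subtype_val
  invol := fun f => Subtype.ext (funext fun v => by simp)
  τz := rfl

lemma KZ_sum_pos {r n : ℕ} (g : ((KZ r).pow n).nz) : 0 < ∑ v, ∑ i, (g.1 i).1 v := by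
  have h0 : 0 ≤ ∑ v, ∑ i, (g.1 i).1 v :=
    Finset.sum_nonneg fun v _ => Finset.sum_nonneg fun i _ => (g.1 i).2.1 v
  refine lt_of_le_of_ne h0 fun h => g.2 ?_
  funext i
  apply Subtype.ext
  funext v
  rw [eq_comm, Finset.sum_eq_zero_iff_of_nonneg
    (fun v _ => Finset.sum_nonneg fun i _ => (g.1 i).2.1 v)] at h
  have h2 := h v (Finset.mem_univ v)
  rw [Finset.sum_eq_zero_iff_of_nonneg (fun i _ => (g.1 i).2.1 v)] at h2
  exact h2 i (Finset.mem_univ i)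

/-- scaling -/
def KZs.smul {r : ℕ} (c : ℝ) (hc : 0 ≤ c) (f : KZs r) : KZs r :=
  ⟨fun v => c * f.1 v, fun v => mul_nonneg hc (f.2.1 v), fun v => by
    rcases f.2.2 v with h | h <;> simp [h]⟩

theorem homPlus_to_pow (r n : ℕ) : Nonempty (ContinuousMap.HomotopyEquiv
        (Z2Quotient (HomPlus (oddCycle r) (completeGraph n))
          (precompHomPlus (cycleReflect r) (cycleReflect_bijective r) (completeGraph n))
          (precompHomPlus_invol (cycleReflect r) (cycleReflect_bijective r)
            (cycleReflect_invol r) (completeGraph n)))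
        ((KZ r).pow n).Q) := by
  apply quotHE
  let f : C(HomPlus (oddCycle r) (completeGraph n), ((KZ r).pow n).nz) :=
    { toFun := fun η => ⟨fun i => ⟨fun v => η.1 v i, fun v => η.2.1 v i, fun v => by
          by_contra hc
          push Not at hc
          exact η.2.2.2 v (v+1) (Or.inr rfl) i i hc.1 hc.2 rfl⟩, fun h => by
          have h1 := η.2.2.1
          have : ∀ v i, η.1 v i = 0 := fun v i =>
            congrFun (congrArg Subtype.val (congrFun h i)) v
          simp [this] at h1⟩
      continuous_toFun := by
        apply Continuous.subtype_mk
        refine continuous_pi fun i => ?_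
        apply Continuous.subtype_mk
        exact continuous_pi fun v => (continuous_apply i).comp
          ((continuous_apply v).comp continuous_subtype_val) }
  let N : ((KZ r).pow n).nz → ℝ := fun g => ∑ v, ∑ i, (g.1 i).1 v
  have hN : Continuous N := by
    refine continuous_finsetSum _ fun v _ => continuous_finsetSum _ fun i _ => ?_
    exact (continuous_apply v).comp (continuous_subtype_val.comp
      ((continuous_apply i).comp continuous_subtype_val))
  have hNp : ∀ g, 0 < N g := fun g => KZ_sum_pos g
  have cc : ∀ i v, Continuous fun g : ((KZ r).pow n).nz => (g.1 i).1 v := fun i v =>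
    (continuous_apply v).comp (continuous_subtype_val.comp
      ((continuous_apply i).comp continuous_subtype_val))
  have hNτ : ∀ g, N (((KZ r).pow n).nτ g) = N g := fun g => by
    show ∑ v, ∑ i, (g.1 i).1 (-v) = ∑ v, ∑ i, (g.1 i).1 v
    exact Fintype.sum_equiv (Equiv.neg _) _ _ (fun v => rfl)
  let g : C(((KZ r).pow n).nz, HomPlus (oddCycle r) (completeGraph n)) :=
    { toFun := fun g => ⟨fun v i => (N g)⁻¹ * (g.1 i).1 v,
        fun v i => mul_nonneg (inv_nonneg.2 (hNp g).le) ((g.1 i).2.1 v), by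
          simp_rw [← Finset.mul_sum]
          exact inv_mul_cancel₀ (hNp g).ne', by
          intro x y hxy a b ha hb hab
          subst hab
          have ha := right_ne_zero_of_mul ha
          have hb := right_ne_zero_of_mul hb
          rcases hxy with h | h
          · rcases (g.1 a).2.2 y with h' | h'
            · exact hb h'
            · exact ha (h ▸ h')
          · rcases (g.1 a).2.2 x with h' | h'
            · exact ha h'
            · exact hb (h ▸ h')⟩
      continuous_toFun := by
        apply Continuous.subtype_mk
        refine continuous_pi fun v => continuous_pi fun i => ?_
        exact (hN.inv₀ fun g => (hNp g).ne').mul (cc i v) }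
  refine ⟨f, g, ?_, ?_, ?_, ?_⟩
  · intro x; rfl
  · intro x
    apply Subtype.ext
    funext v i
    show (N (((KZ r).pow n).nτ x))⁻¹ * _ = (N x)⁻¹ * _
    rw [hNτ]; rfl
  · have : g.comp f = ContinuousMap.id _ := by
      ext x v i
      show (N (f x))⁻¹ * x.1 v i = x.1 v i
      rw [show N (f x) = 1 from x.2.2.1]; simp
    rw [this]
    exact ⟨ContinuousMap.Homotopy.refl _, fun x t => rfl⟩
  · have hpos : ∀ (t : unitInterval) x, 0 < (1 - t.1) * (N x)⁻¹ + t.1 := by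
      intro t x
      have h1 := inv_pos.2 (hNp x)
      rcases eq_or_lt_of_le t.2.1 with h | h
      · rw [← h]; simpa using h1
      · have : 0 ≤ (1 - t.1) * (N x)⁻¹ := mul_nonneg (by linarith [t.2.2]) h1.le
        linarith
    refine ⟨⟨⟨fun p => ⟨fun i => KZs.smul ((1 - p.1.1) * (N p.2)⁻¹ + p.1.1) (hpos _ _).le (p.2.1 i),
      fun h => p.2.2 ?_⟩, ?_⟩, ?_, ?_⟩, ?_⟩
    · funext i
      apply Subtype.ext
      funext v
      have := congrFun (congrArg Subtype.val (congrFun h i)) v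
      exact (mul_eq_zero.1 this).resolve_left (hpos _ _).ne'
    · apply Continuous.subtype_mk
      refine continuous_pi fun i => ?_
      apply Continuous.subtype_mk
      refine continuous_pi fun v => ?_
      have h1 : Continuous fun p : unitInterval × ((KZ r).pow n).nz => (N p.2)⁻¹ :=
        (hN.comp continuous_snd).inv₀ fun p => (hNp p.2).ne'
      have h2 := (cc i v).comp (continuous_snd (X := unitInterval))
      have h3 : Continuous fun p : unitInterval × ((KZ r).pow n).nz => p.1.1 := by fun_prop
      exact (((continuous_const.sub h3).mul h1).add h3).mul h2
    · intro x
      apply Subtype.ext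
      funext i
      apply Subtype.ext
      funext v
      show ((1 - ((0 : unitInterval) : ℝ)) * (N x)⁻¹ + ((0 : unitInterval) : ℝ)) * (x.1 i).1 v
        = (N x)⁻¹ * (x.1 i).1 v
      simp
    · intro x
      apply Subtype.ext
      funext i
      apply Subtype.ext
      funext v
      show ((1 - ((1 : unitInterval) : ℝ)) * (N x)⁻¹ + ((1 : unitInterval) : ℝ)) * (x.1 i).1 v
        = (x.1 i).1 v
      simp
    · intro x t
      apply Subtype.ext
      funext i
      apply Subtype.ext
      funext v
      show ((1 - (t : ℝ)) * (N (((KZ r).pow n).nτ x))⁻¹ + t) * (x.1 i).1 (-v) =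
        ((1 - (t : ℝ)) * (N x)⁻¹ + t) * (x.1 i).1 (-v)
      rw [hNτ]


def PathSeq (r : ℕ) (x : ℕ → ℝ) : Prop :=
  (∀ n, 0 ≤ x n) ∧ (∀ n, x n = 0 ∨ x (n + 1) = 0) ∧ ∀ n, r < n → x n = 0

abbrev K2s (r : ℕ) : Type := {p : (ℕ → ℝ) × (ℕ → ℝ) // PathSeq r p.1 ∧ PathSeq r p.2 ∧
  p.1 0 = p.2 0 ∧ (p.1 r = 0 ∨ p.2 r = 0)}

lemma PathSeq.zero (r : ℕ) : PathSeq r (fun _ => 0) :=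
  ⟨fun _ => le_rfl, fun _ => Or.inl rfl, fun _ _ => rfl⟩

def K2 (r : ℕ) : ZC where
  X := K2s r
  z := ⟨(fun _ => 0, fun _ => 0), PathSeq.zero r, PathSeq.zero r, rfl, Or.inl rfl⟩
  τ := fun p => ⟨(p.1.2, p.1.1), p.2.2.1, p.2.1, p.2.2.2.1.symm, p.2.2.2.2.symm⟩
  cτ := by
    apply Continuous.subtype_mk
    fun_prop
  invol := fun f => rfl
  τz := rfl

lemma CE.of_inv {A B : ZC} (f : A.X → B.X) (g : B.X → A.X) (hf : Continuous f) (hg : Continuous g)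
    (h1 : ∀ x, f (A.τ x) = B.τ (f x)) (h2 : ∀ x, g (f x) = x) (h3 : ∀ x, f (g x) = x)
    (h4 : g B.z = A.z) : CE A B := by
  refine ⟨f, g, hf, hg, h1, ?_, ?_, ?_, Defo.refl _ _ h2, Defo.refl _ _ h3⟩
  · intro x
    rw [← h2 (A.τ (g x)), h1, h3]
  · intro x hx
    rw [← h2 x, hx, h4]
  · intro x hx
    rw [← h3 x, hx, ← h4, h3]

def seqOf (r : ℕ) (f : ZMod (2 * r + 1) → ℝ) (n : ℕ) : ℝ := if n ≤ r then f n else 0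

lemma seqOf_path (r : ℕ) (f : KZs r) : PathSeq r (seqOf r f.1) := by
  refine ⟨fun n => ?_, fun n => ?_, fun n hn => ?_⟩
  · unfold seqOf; split_ifs
    · exact f.2.1 _
    · exact le_rfl
  · unfold seqOf
    by_cases h : n + 1 ≤ r
    · rw [if_pos (by omega), if_pos h]
      push_cast
      exact f.2.2 n
    · right; rw [if_neg h]
  · unfold seqOf; rw [if_neg (by omega)]

def glue (r : ℕ) (x y : ℕ → ℝ) (v : ZMod (2 * r + 1)) : ℝ :=
  if v.val ≤ r then x v.val else y (2 * r + 1 - v.val)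

theorem KZ_K2 (r : ℕ) (hr : 1 ≤ r) : CE (KZ r) (K2 r) := by
  have hpath : ∀ p : K2s r, (∀ v, 0 ≤ glue r p.1.1 p.1.2 v) ∧
      ∀ v, glue r p.1.1 p.1.2 v = 0 ∨ glue r p.1.1 p.1.2 (v + 1) = 0 := by
    rintro ⟨⟨x, y⟩, hx, hy, h0, hr'⟩
    replace h0 : x 0 = y 0 := h0
    refine ⟨fun v => ?_, fun v => ?_⟩
    · unfold glue; split_ifs
      · exact hx.1 _
      · exact hy.1 _
    · have hv := v.val_lt
      have h1 : (1 : ZMod (2 * r + 1)).val = 1 := ZMod.val_one_eq_one_mod _ |>.trans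
        (Nat.mod_eq_of_lt (by omega))
      have h2 : (v + 1).val = (v.val + 1) % (2 * r + 1) := by rw [ZMod.val_add, h1]
      unfold glue
      by_cases ha : v.val + 1 < 2 * r + 1
      · rw [Nat.mod_eq_of_lt ha] at h2
        rw [h2]
        rcases lt_trichotomy v.val r with h | h | h
        · rw [if_pos h.le, if_pos (by omega)]
          exact hx.2.1 _
        · rw [if_pos h.le, if_neg (by omega), h, show 2 * r + 1 - (r + 1) = r by omega]
          exact hr'
        · rw [if_neg (by omega), if_neg (by omega)]
          have := hy.2.1 (2 * r + 1 - (v.val + 1))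
          rw [show 2 * r + 1 - (v.val + 1) + 1 = 2 * r + 1 - v.val by omega] at this
          exact this.symm
      · have hv' : v.val = 2 * r := by omega
        rw [hv', Nat.mod_self] at h2
        rw [h2, hv', if_neg (by omega), if_pos (by omega), show 2 * r + 1 - 2 * r = 0 + 1 by omega]
        show y (0 + 1) = 0 ∨ x 0 = 0
        rw [h0]
        exact (hy.2.1 0).symm
  refine CE.of_inv (A := KZ r) (B := K2 r)
    (fun f => ⟨(seqOf r f.1, seqOf r ((KZ r).τ f).1), seqOf_path r f, seqOf_path r _, ?_, ?_⟩)
    (fun p => ⟨glue r p.1.1 p.1.2, hpath p⟩) ?_ ?_ ?_ ?_ ?_ ?_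
  · show seqOf r f.1 0 = seqOf r (fun v => f.1 (-v)) 0
    simp [seqOf]
  · show seqOf r f.1 r = 0 ∨ seqOf r (fun v => f.1 (-v)) r = 0
    simp only [seqOf, le_refl, if_true]
    have := f.2.2 r
    rwa [show (r : ZMod (2 * r + 1)) + 1 = -r by
      have : ((2 * r + 1 : ℕ) : ZMod (2 * r + 1)) = 0 := ZMod.natCast_self _
      push_cast at this
      linear_combination this] at this
  · apply Continuous.subtype_mk
    refine Continuous.prodMk (continuous_pi fun n => ?_) (continuous_pi fun n => ?_)
    · unfold seqOf; split_ifs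
      · exact (continuous_apply _).comp continuous_subtype_val
      · exact continuous_const
    · unfold seqOf; split_ifs
      · exact (continuous_apply _).comp (continuous_subtype_val.comp (KZ r).cτ)
      · exact continuous_const
  · apply Continuous.subtype_mk
    refine continuous_pi fun v => ?_
    unfold glue; split_ifs
    · exact (continuous_apply _).comp (continuous_fst.comp continuous_subtype_val)
    · exact (continuous_apply _).comp (continuous_snd.comp continuous_subtype_val)
  · intro f
    apply Subtype.ext
    show (_, seqOf r ((KZ r).τ ((KZ r).τ f)).1) = _
    rw [(KZ r).invol]; rfl
  · intro f
    apply Subtype.ext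
    funext v
    have hv := v.val_lt
    show glue r (seqOf r f.1) (seqOf r (fun v => f.1 (-v))) v = f.1 v
    unfold glue seqOf
    split_ifs with h1 h2
    · simp
    · congr 1
      rw [Nat.cast_sub hv.le]
      simp
    · omega
  · rintro ⟨⟨x, y⟩, hx, hy, h0, hr'⟩
    replace h0 : x 0 = y 0 := h0
    apply Subtype.ext
    have hval : ∀ n, n ≤ r → (n : ZMod (2 * r + 1)).val = n := fun n hn =>
      ZMod.val_cast_of_lt (by omega)
    refine Prod.ext (funext fun n => ?_) (funext fun n => ?_)
    · show seqOf r (glue r x y) n = x n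
      unfold seqOf glue
      split_ifs with h1 h2
      · rw [hval n h1]
      · rw [hval n h1] at h2; omega
      · exact (hx.2.2 n (by omega)).symm
    · show seqOf r (fun v => glue r x y (-v)) n = y n
      unfold seqOf glue
      by_cases h1 : n ≤ r
      · rw [if_pos h1]
        rcases Nat.eq_zero_or_pos n with h | h
        · subst h; simp [h0]
        · have hne : NeZero (n : ZMod (2 * r + 1)) := ⟨fun hh => by
            have := hval n h1; rw [hh] at this; simp at this; omega⟩
          have : (-(n : ZMod (2 * r + 1))).val = 2 * r + 1 - n := by
            rw [ZMod.val_neg_of_ne_zero, hval n h1]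
          show (if (-(n : ZMod (2 * r + 1))).val ≤ r then x (-(n : ZMod (2 * r + 1))).val
            else y (2 * r + 1 - (-(n : ZMod (2 * r + 1))).val)) = y n
          rw [this, if_neg (by omega)]
          congr 1; omega
      · rw [if_neg h1]; exact (hy.2.2 n (by omega)).symm
  · apply Subtype.ext
    funext v
    show glue r (fun _ => 0) (fun _ => 0) v = 0
    simp [glue]


def Vd (j : ℕ) (t s : ℕ → ℝ) : Prop :=
  (∀ i, 0 ≤ s i) ∧ ∀ i, i < j → (s i = 0 ∨ t i + s i - s (i + 1) ≤ 0) ∧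
    (s (i + 1) = 0 ∨ 0 ≤ t i + s i - s (i + 1))

def XX (j : ℕ) (t s : ℕ → ℝ) (n : ℕ) : ℝ :=
  if n % 3 = 0 then (if n / 3 ≤ j then s (n / 3) else 0)
  else if n / 3 < j then
    (if n % 3 = 1 then max (t (n / 3) + s (n / 3) - s (n / 3 + 1)) 0
      else max (-(t (n / 3) + s (n / 3) - s (n / 3 + 1))) 0)
  else 0

def tt (x : ℕ → ℝ) (i : ℕ) : ℝ := x (3 * i + 1) - x (3 * i + 2) - x (3 * i) + x (3 * i + 3)
def ss (x : ℕ → ℝ) (i : ℕ) : ℝ := x (3 * i)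

lemma XX_0 (j : ℕ) (t s : ℕ → ℝ) (i : ℕ) (h : i ≤ j) : XX j t s (3 * i) = s i := by
  unfold XX
  rw [if_pos (by omega), show 3 * i / 3 = i by omega, if_pos h]

lemma XX_1 (j : ℕ) (t s : ℕ → ℝ) (i : ℕ) (h : i < j) :
    XX j t s (3 * i + 1) = max (t i + s i - s (i + 1)) 0 := by
  unfold XX
  rw [if_neg (by omega), show (3 * i + 1) / 3 = i by omega, if_pos h, if_pos (by omega)]

lemma XX_2 (j : ℕ) (t s : ℕ → ℝ) (i : ℕ) (h : i < j) :
    XX j t s (3 * i + 2) = max (-(t i + s i - s (i + 1))) 0 := by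
  unfold XX
  rw [if_neg (by omega), show (3 * i + 2) / 3 = i by omega, if_pos h, if_neg (by omega)]

lemma XX_out (j : ℕ) (t s : ℕ → ℝ) (n : ℕ) (h : 3 * j < n) : XX j t s n = 0 := by
  unfold XX
  split_ifs <;> first | rfl | omega

lemma XX_cases {P : ℕ → Prop} (j : ℕ) (h0 : ∀ i, i ≤ j → P (3 * i))
    (h1 : ∀ i, i < j → P (3 * i + 1)) (h2 : ∀ i, i < j → P (3 * i + 2))
    (h3 : ∀ n, 3 * j < n → P n) : ∀ n, P n := by
  intro n
  by_cases h : 3 * j < n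
  · exact h3 n h
  · have : n = 3 * (n / 3) ∨ n = 3 * (n / 3) + 1 ∨ n = 3 * (n / 3) + 2 := by omega
    rcases this with h' | h' | h' <;> rw [h']
    · exact h0 _ (by omega)
    · exact h1 _ (by omega)
    · exact h2 _ (by omega)

lemma XX_congr (j : ℕ) (t s t' s' : ℕ → ℝ) (ht : ∀ i, i < j → t i = t' i)
    (hs : ∀ i, i ≤ j → s i = s' i) : XX j t s = XX j t' s' := by
  funext n
  revert n
  refine XX_cases j ?_ ?_ ?_ ?_
  · intro i h; rw [XX_0 _ _ _ _ h, XX_0 _ _ _ _ h, hs i h]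
  · intro i h; rw [XX_1 _ _ _ _ h, XX_1 _ _ _ _ h, hs i h.le, ht i h, hs _ h]
  · intro i h; rw [XX_2 _ _ _ _ h, XX_2 _ _ _ _ h, hs i h.le, ht i h, hs _ h]
  · intro n h; rw [XX_out _ _ _ _ h, XX_out _ _ _ _ h]

lemma XX_path {j : ℕ} {t s : ℕ → ℝ} (h : Vd j t s) : PathSeq (3 * j) (XX j t s) := by
  refine ⟨?_, ?_, fun n hn => XX_out _ _ _ _ hn⟩
  · refine XX_cases j ?_ ?_ ?_ ?_
    · intro i hi; rw [XX_0 _ _ _ _ hi]; exact h.1 i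
    · intro i hi; rw [XX_1 _ _ _ _ hi]; exact le_max_right _ _
    · intro i hi; rw [XX_2 _ _ _ _ hi]; exact le_max_right _ _
    · intro n hn; rw [XX_out _ _ _ _ hn]
  · refine XX_cases j ?_ ?_ ?_ ?_
    · intro i hi
      rcases hi.lt_or_eq with hi' | hi'
      · rw [XX_0 _ _ _ _ hi, XX_1 _ _ _ _ hi']
        rcases (h.2 i hi').1 with h1 | h1
        · exact Or.inl h1
        · exact Or.inr (max_eq_right h1)
      · right; rw [XX_out]; omega
    · intro i hi
      rw [XX_1 _ _ _ _ hi, show 3 * i + 1 + 1 = 3 * i + 2 by omega, XX_2 _ _ _ _ hi]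
      rcases le_total (t i + s i - s (i + 1)) 0 with h1 | h1
      · left; exact max_eq_right h1
      · right; exact max_eq_right (by linarith)
    · intro i hi
      rw [XX_2 _ _ _ _ hi, show 3 * i + 2 + 1 = 3 * (i + 1) by omega, XX_0 _ _ _ _ hi]
      rcases (h.2 i hi).2 with h1 | h1
      · exact Or.inr h1
      · exact Or.inl (max_eq_right (by linarith))
    · intro n hn; left; rw [XX_out _ _ _ _ hn]

lemma ss_XX (j : ℕ) (t s : ℕ → ℝ) (i : ℕ) (h : i ≤ j) : ss (XX j t s) i = s i := XX_0 _ _ _ _ h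

lemma tt_XX (j : ℕ) (t s : ℕ → ℝ) (i : ℕ) (h : i < j) : tt (XX j t s) i = t i := by
  unfold tt
  rw [XX_1 _ _ _ _ h, XX_2 _ _ _ _ h, XX_0 _ _ _ _ h.le, show 3 * i + 3 = 3 * (i + 1) by omega,
    XX_0 _ _ _ _ h]
  rcases le_total (t i + s i - s (i + 1)) 0 with h1 | h1
  · rw [max_eq_right h1, max_eq_left (by linarith)]; ring
  · rw [max_eq_left h1, max_eq_right (by linarith)]; ring

lemma XX_tt {j : ℕ} {x : ℕ → ℝ} (h : PathSeq (3 * j) x) : XX j (tt x) (ss x) = x := by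
  funext n
  revert n
  obtain ⟨h0, h1, h2⟩ := h
  have key : ∀ i, tt x i + ss x i - ss x (i + 1) = x (3 * i + 1) - x (3 * i + 2) := by
    intro i; simp only [tt, ss, show 3 * (i + 1) = 3 * i + 3 by omega]; ring
  refine XX_cases j ?_ ?_ ?_ ?_
  · intro i hi; rw [XX_0 _ _ _ _ hi]; rfl
  · intro i hi; rw [XX_1 _ _ _ _ hi, key]
    have a := h0 (3 * i + 1)
    have b := h0 (3 * i + 2)
    rcases h1 (3 * i + 1) with h | h
    · rw [h, max_eq_right (by linarith)]
    · rw [show 3 * i + 2 = 3 * i + 1 + 1 by omega, h, max_eq_left (by linarith)]; ring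
  · intro i hi; rw [XX_2 _ _ _ _ hi, key]
    have a := h0 (3 * i + 1)
    have b := h0 (3 * i + 2)
    rcases h1 (3 * i + 1) with h | h
    · rw [h, max_eq_left (by linarith)]; ring
    · rw [show 3 * i + 2 = 3 * i + 1 + 1 by omega, h, max_eq_right (by linarith)]
  · intro n hn; rw [XX_out _ _ _ _ hn, h2 n hn]

lemma Vd_tt {j : ℕ} {x : ℕ → ℝ} (h : PathSeq (3 * j) x) : Vd j (tt x) (ss x) := by
  obtain ⟨h0, h1, h2⟩ := h
  have key : ∀ i, tt x i + ss x i - ss x (i + 1) = x (3 * i + 1) - x (3 * i + 2) := by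
    intro i; simp only [tt, ss, show 3 * (i + 1) = 3 * i + 3 by omega]; ring
  refine ⟨fun i => h0 _, fun i hi => ?_⟩
  rw [key]
  have a := h0 (3 * i + 1)
  have b := h0 (3 * i + 2)
  constructor
  · rcases h1 (3 * i) with h | h
    · exact Or.inl h
    · right; linarith
  · rcases h1 (3 * i + 2) with h | h
    · right; linarith
    · left; exact h

lemma Vd.sub {j : ℕ} {t s : ℕ → ℝ} (h : Vd j t s) {a : ℝ} (ha : 0 ≤ a) :
    Vd j t (fun i => max (s i - a) 0) := by
  refine ⟨fun i => le_max_right _ _, fun i hi => ?_⟩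
  obtain ⟨h1, h2⟩ := h.2 i hi
  have p1 := h.1 i
  have p2 := h.1 (i + 1)
  dsimp only
  constructor
  · by_cases c : s i ≤ a
    · left; exact max_eq_right (by linarith)
    · right
      push Not at c
      rw [max_eq_left (by linarith)]
      have := le_max_left (s (i + 1) - a) 0
      have := h1.resolve_left (by linarith)
      linarith
  · by_cases c : s (i + 1) ≤ a
    · left; exact max_eq_right (by linarith)
    · right
      push Not at c
      rw [max_eq_left (b := (0 : ℝ)) (a := s (i + 1) - a) (by linarith)]
      have := le_max_left (s i - a) 0
      have := h2.resolve_left (by linarith)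
      linarith

lemma Vd.sup {j : ℕ} {t s s' : ℕ → ℝ} (h : Vd j t s) (h' : Vd j t s') :
    Vd j t (fun i => max (s i) (s' i)) := by
  refine ⟨fun i => le_max_of_le_left (h.1 i), fun i hi => ?_⟩
  obtain ⟨h1, h2⟩ := h.2 i hi
  obtain ⟨h1', h2'⟩ := h'.2 i hi
  have p1 := h.1 i
  have p2 := h.1 (i + 1)
  have p1' := h'.1 i
  have p2' := h'.1 (i + 1)
  dsimp only
  constructor
  · rcases le_total (s i) (s' i) with c | c
    · rw [max_eq_right c]
      have := le_max_right (s (i + 1)) (s' (i + 1))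
      rcases h1' with h | h
      · exact Or.inl h
      · right; linarith
    · rw [max_eq_left c]
      have := le_max_left (s (i + 1)) (s' (i + 1))
      rcases h1 with h | h
      · exact Or.inl h
      · right; linarith
  · rcases le_total (s (i + 1)) (s' (i + 1)) with c | c
    · rw [max_eq_right c]
      have := le_max_right (s i) (s' i)
      rcases h2' with h | h
      · exact Or.inl h
      · right; linarith
    · rw [max_eq_left c]
      have := le_max_left (s i) (s' i)
      rcases h2 with h | h
      · exact Or.inl h
      · right; linarith

def TS (t : ℕ → ℝ) (i : ℕ) : ℝ := ∑ l ∈ Finset.range i, t l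

lemma Vd.lin (j : ℕ) (t : ℕ → ℝ) (b : ℝ) : Vd j t (fun i => max (b + TS t i) 0) := by
  refine ⟨fun i => le_max_right _ _, fun i hi => ?_⟩
  dsimp only
  have : TS t (i + 1) = TS t i + t i := Finset.sum_range_succ _ _
  rw [this]
  constructor
  · rcases le_total (b + TS t i) 0 with c | c
    · left; exact max_eq_right c
    · right
      rw [max_eq_left c]
      linarith [le_max_left (b + (TS t i + t i)) 0]
  · rcases le_total (b + (TS t i + t i)) 0 with c | c
    · left; exact max_eq_right c
    · right
      rw [max_eq_left c]
      linarith [le_max_left (b + TS t i) 0]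

lemma Vd.zero (j : ℕ) (t : ℕ → ℝ) : Vd j t (fun _ => 0) :=
  ⟨fun _ => le_rfl, fun _ _ => ⟨Or.inl rfl, Or.inl rfl⟩⟩

lemma Vd.const {j : ℕ} {t s : ℕ → ℝ} (h : Vd j t s) (ht : ∀ i, i < j → t i = 0) :
    ∀ i, i ≤ j → s i = s 0 := by
  intro i
  induction i with
  | zero => intro _; rfl
  | succ i ih =>
    intro hi
    have ih := ih (by omega)
    obtain ⟨h1, h2⟩ := h.2 i hi
    rw [ht i hi] at h1 h2
    have p1 := h.1 i
    have p2 := h.1 (i + 1)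
    rw [← ih]
    rcases h1 with h1 | h1 <;> rcases h2 with h2 | h2 <;> linarith

lemma XX_continuous {Y : Type} [TopologicalSpace Y] (j : ℕ) (t s : Y → ℕ → ℝ)
    (ht : ∀ i, Continuous fun y => t y i) (hs : ∀ i, Continuous fun y => s y i) :
    Continuous fun y => XX j (t y) (s y) := by
  refine continuous_pi fun n => ?_
  unfold XX
  have a := ht (n / 3)
  have b := hs (n / 3)
  have c := hs (n / 3 + 1)
  split_ifs <;> fun_prop

lemma tt_continuous {Y : Type} [TopologicalSpace Y] (x : Y → ℕ → ℝ) (hx : ∀ n, Continuous fun y => x y n)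
    (i : ℕ) : Continuous fun y => tt (x y) i := by
  unfold tt
  have a := hx (3 * i)
  have b := hx (3 * i + 1)
  have c := hx (3 * i + 2)
  have d := hx (3 * i + 3)
  fun_prop

lemma TS_continuous {Y : Type} [TopologicalSpace Y] (t : Y → ℕ → ℝ) (ht : ∀ n, Continuous fun y => t y n)
    (i : ℕ) : Continuous fun y => TS (t y) i :=
  continuous_finsetSum _ fun l _ => ht l

def ext {j : ℕ} (t : Fin j → ℝ) (i : ℕ) : ℝ := if h : i < j then t ⟨i, h⟩ else 0

lemma ext_lt {j : ℕ} (t : Fin j → ℝ) (i : ℕ) (h : i < j) : ext t i = t ⟨i, h⟩ := dif_pos h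

lemma ext_continuous {Y : Type} [TopologicalSpace Y] {j : ℕ} (t : Y → Fin j → ℝ) (ht : Continuous t)
    (i : ℕ) : Continuous fun y => ext (t y) i := by
  unfold ext
  split_ifs
  · exact (continuous_apply _).comp ht
  · exact continuous_const

def RR (j : ℕ) : ZC where
  X := (Fin j → ℝ) × (Fin j → ℝ)
  z := 0
  τ := Prod.swap
  cτ := continuous_swap
  invol := fun x => rfl
  τz := rfl

lemma PathSeq.eq_zero {j : ℕ} {x : ℕ → ℝ} (h : PathSeq (3 * j) x) (ht : ∀ i, i < j → tt x i = 0)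
    (h0 : x 0 = 0) : x = fun _ => 0 := by
  have hc := (Vd_tt h).const ht
  rw [← XX_tt h]
  rw [XX_congr j (tt x) (ss x) (fun _ => 0) (fun _ => 0) ht (fun i hi => by rw [hc i hi]; exact h0)]
  funext n
  unfold XX
  simp

lemma K2_cont1 (r : ℕ) (n : ℕ) : Continuous fun p : K2s r => p.1.1 n :=
  (continuous_apply n).comp (continuous_fst.comp continuous_subtype_val)
lemma K2_cont2 (r : ℕ) (n : ℕ) : Continuous fun p : K2s r => p.1.2 n :=
  (continuous_apply n).comp (continuous_snd.comp continuous_subtype_val)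


def N2 (j : ℕ) (x y : ℕ → ℝ) : ℝ := ∑ i ∈ Finset.range (j + 1), (x i + y i)

lemma N2_le1 {j : ℕ} {x y : ℕ → ℝ} (hx : ∀ i, 0 ≤ x i) (hy : ∀ i, 0 ≤ y i) {i : ℕ} (hi : i ≤ j) :
    x i ≤ N2 j x y := by
  have := Finset.single_le_sum (s := Finset.range (j + 1)) (f := fun i => x i + y i)
    (fun i _ => add_nonneg (hx i) (hy i)) (Finset.mem_range.2 (Nat.lt_succ_of_le hi))
  have h := hy i
  unfold N2
  linarith

lemma N2_comm (j : ℕ) (x y : ℕ → ℝ) : N2 j x y = N2 j y x := by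
  unfold N2; exact Finset.sum_congr rfl fun i _ => add_comm _ _

lemma N2_nonneg {j : ℕ} {x y : ℕ → ℝ} (hx : ∀ i, 0 ≤ x i) (hy : ∀ i, 0 ≤ y i) : 0 ≤ N2 j x y :=
  Finset.sum_nonneg fun i _ => add_nonneg (hx i) (hy i)

lemma N2_continuous {Y : Type} [TopologicalSpace Y] (j : ℕ) (x y : Y → ℕ → ℝ)
    (hx : ∀ i, Continuous fun p => x p i) (hy : ∀ i, Continuous fun p => y p i) :
    Continuous fun p => N2 j (x p) (y p) :=
  continuous_finsetSum _ fun i _ => (hx i).add (hy i)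

lemma XX_z (j : ℕ) (t s : ℕ → ℝ) : XX j t s 0 = s 0 := XX_0 j t s 0 (Nat.zero_le _)

lemma K2s_ext {r : ℕ} {p q : K2s r} (h1 : p.1.1 = q.1.1) (h2 : p.1.2 = q.1.2) : p = q :=
  Subtype.ext (Prod.ext h1 h2)

theorem caseA (j : ℕ) : CE (K2 (3 * j)) (RR j) := by
  let f : K2s (3 * j) → (RR j).X := fun p => (fun i => tt p.1.1 i, fun i => tt p.1.2 i)
  let g : (RR j).X → K2s (3 * j) := fun q => ⟨(XX j (ext q.1) fun _ => 0, XX j (ext q.2) fun _ => 0),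
    XX_path (Vd.zero _ _), XX_path (Vd.zero _ _), by
      dsimp only
      rw [XX_z, XX_z],
      Or.inl (by dsimp only; rw [XX_0 _ _ _ _ le_rfl])⟩
  have cf : Continuous f := by
    refine Continuous.prodMk ?_ ?_
    · exact continuous_pi fun i => tt_continuous _ (K2_cont1 _) _
    · exact continuous_pi fun i => tt_continuous _ (K2_cont2 _) _
  have cg : Continuous g := by
    refine Continuous.subtype_mk (Continuous.prodMk ?_ ?_) _
    · exact XX_continuous _ _ _ (ext_continuous _ continuous_fst) (fun i => continuous_const)
    · exact XX_continuous _ _ _ (ext_continuous _ continuous_snd) (fun i => continuous_const)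
  have fz : ∀ p : K2s (3 * j), (∀ i, i < j → tt p.1.1 i = 0) → (∀ i, i < j → tt p.1.2 i = 0) →
      p = (K2 (3 * j)).z := by
    rintro ⟨⟨x, y⟩, hx, hy, h0, hr⟩ h1 h2
    dsimp only at hx hy h0 hr h1 h2
    have a := (Vd_tt hx).const h1 j le_rfl
    have b := (Vd_tt hy).const h2 j le_rfl
    simp only [ss, mul_zero] at a b
    have hx0 : x 0 = 0 := by
      rcases hr with hr | hr <;> linarith
    exact K2s_ext (hx.eq_zero h1 hx0) (hy.eq_zero h2 (by rw [← h0]; exact hx0))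
  have fg : ∀ q, f (g q) = q := by
    intro q
    refine Prod.ext ?_ ?_
    · funext i; exact (tt_XX j (ext q.1) (fun _ => 0) i i.2).trans (ext_lt q.1 i i.2)
    · funext i; exact (tt_XX j (ext q.2) (fun _ => 0) i i.2).trans (ext_lt q.2 i i.2)
  refine ⟨f, g, cf, cg, fun _ => rfl, fun _ => rfl, ?_, ?_, ?_, Defo.refl _ _ fg⟩
  · intro p hp
    exact fz p (fun i hi => congrFun (congrArg Prod.fst hp) ⟨i, hi⟩)
      (fun i hi => congrFun (congrArg Prod.snd hp) ⟨i, hi⟩)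
  · intro q hq
    rw [← fg q, hq]
    refine Prod.ext ?_ ?_ <;> funext i <;> show tt (fun _ => 0) i = 0 <;> simp [tt]
  · let N : K2s (3 * j) → ℝ := fun p => N2 j (ss p.1.1) (ss p.1.2)
    have N0 : ∀ p, 0 ≤ N p := fun p => N2_nonneg (fun i => p.2.1.1 _) (fun i => p.2.2.1.1 _)
    have hl : ∀ (l : unitInterval) p, 0 ≤ (l : ℝ) * N p := fun l p => mul_nonneg l.2.1 (N0 p)
    let H : unitInterval × K2s (3 * j) → K2s (3 * j) := fun q =>
      ⟨(XX j (tt q.2.1.1) fun i => max (ss q.2.1.1 i - q.1 * N q.2) 0,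
        XX j (tt q.2.1.2) fun i => max (ss q.2.1.2 i - q.1 * N q.2) 0),
        XX_path ((Vd_tt q.2.2.1).sub (hl _ _)), XX_path ((Vd_tt q.2.2.2.1).sub (hl _ _)), by
        dsimp only
        rw [XX_z, XX_z]
        have := q.2.2.2.2.1
        simp only [ss, mul_zero]
        rw [this], by
        dsimp only
        rw [XX_0 _ _ _ _ le_rfl, XX_0 _ _ _ _ le_rfl]
        have h := hl q.1 q.2
        rcases q.2.2.2.2.2 with h' | h'
        · left; rw [show ss q.2.1.1 j = 0 from h', max_eq_right (by linarith)]
        · right; rw [show ss q.2.1.2 j = 0 from h', max_eq_right (by linarith)]⟩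
    refine ⟨H, ?_, ?_, ?_, ?_, ?_⟩
    · have cN : Continuous N := N2_continuous _ _ _ (fun i => K2_cont1 _ _) (fun i => K2_cont2 _ _)
      refine Continuous.subtype_mk (Continuous.prodMk ?_ ?_) _
      · refine XX_continuous _ _ _ (tt_continuous _ fun n => (K2_cont1 _ n).comp continuous_snd)
          fun i => ?_
        have := (K2_cont1 (3 * j) (3 * i)).comp (continuous_snd (X := unitInterval))
        exact (this.sub ((continuous_subtype_val.comp continuous_fst).mul (cN.comp continuous_snd))).max
          continuous_const
      · refine XX_continuous _ _ _ (tt_continuous _ fun n => (K2_cont2 _ n).comp continuous_snd)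
          fun i => ?_
        have := (K2_cont2 (3 * j) (3 * i)).comp (continuous_snd (X := unitInterval))
        exact (this.sub ((continuous_subtype_val.comp continuous_fst).mul (cN.comp continuous_snd))).max
          continuous_const
    · intro p
      refine K2s_ext ?_ ?_
      · conv_rhs => rw [← XX_tt p.2.1]
        exact XX_congr j (tt p.1.1) (fun i => max (ss p.1.1 i - (0 : unitInterval) * N p) 0) _ _ (fun _ _ => rfl) fun i _ => by
          simp only [Set.Icc.coe_zero, zero_mul, sub_zero]
          exact max_eq_left (p.2.1.1 _)
      · conv_rhs => rw [← XX_tt p.2.2.1]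
        exact XX_congr j (tt p.1.2) (fun i => max (ss p.1.2 i - (0 : unitInterval) * N p) 0) _ _ (fun _ _ => rfl) fun i _ => by
          simp only [Set.Icc.coe_zero, zero_mul, sub_zero]
          exact max_eq_left (p.2.2.1.1 _)
    · intro p
      refine K2s_ext ?_ ?_
      · refine XX_congr j (tt p.1.1) (fun i => max (ss p.1.1 i - (1 : unitInterval) * N p) 0) (ext (f p).1) (fun _ => 0) (fun i hi => (ext_lt (f p).1 _ hi).symm) fun i hi => ?_
        simp only [Set.Icc.coe_one, one_mul]
        have := N2_le1 (j := j) (x := ss p.1.1) (y := ss p.1.2) (fun i => p.2.1.1 _) (fun i => p.2.2.1.1 _) hi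
        exact max_eq_right (by simp only [N]; linarith)
      · refine XX_congr j (tt p.1.2) (fun i => max (ss p.1.2 i - (1 : unitInterval) * N p) 0) (ext (f p).2) (fun _ => 0) (fun i hi => (ext_lt (f p).2 _ hi).symm) fun i hi => ?_
        simp only [Set.Icc.coe_one, one_mul]
        have := N2_le1 (j := j) (x := ss p.1.2) (y := ss p.1.1) (fun i => p.2.2.1.1 _) (fun i => p.2.1.1 _) hi
        rw [N2_comm] at this
        exact max_eq_right (by simp only [N]; linarith)
    · intro l p
      have : N ((K2 (3 * j)).τ p) = N p := N2_comm _ _ _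
      refine K2s_ext ?_ ?_
      · show XX j (tt p.1.2) (fun i => max (ss p.1.2 i - l * N ((K2 (3 * j)).τ p)) 0) = _
        rw [this]; rfl
      · show XX j (tt p.1.1) (fun i => max (ss p.1.1 i - l * N ((K2 (3 * j)).τ p)) 0) = _
        rw [this]; rfl
    · intro l p hp
      have a1 := congrArg (fun q : K2s (3 * j) => q.1.1) hp
      have a2 := congrArg (fun q : K2s (3 * j) => q.1.2) hp
      have z0 : ∀ i, tt (fun _ => 0) i = 0 := fun i => by simp [tt]
      refine fz p (fun i hi => ?_) (fun i hi => ?_)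
      · rw [← tt_XX j (tt p.1.1) (fun i => max (ss p.1.1 i - l * N p) 0) i hi]
        exact (congrArg (fun x => tt x i) a1).trans (z0 i)
      · rw [← tt_XX j (tt p.1.2) (fun i => max (ss p.1.2 i - l * N p) 0) i hi]
        exact (congrArg (fun x => tt x i) a2).trans (z0 i)


structure OkB (j : ℕ) (t t' s s' : ℕ → ℝ) : Prop where
  v : Vd (j + 1) t s
  v' : Vd (j + 1) t' s'
  z : s (j + 1) = 0
  z' : s' (j + 1) = 0
  h0 : s 0 = s' 0
  cr : 0 ≤ t j + s j ∨ 0 ≤ t' j + s' j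

lemma OkB.swap {j : ℕ} {t t' s s' : ℕ → ℝ} (h : OkB j t t' s s') : OkB j t' t s' s :=
  ⟨h.v', h.v, h.z', h.z, h.h0.symm, h.cr.symm⟩

lemma OkB.mem1 {j : ℕ} {t s : ℕ → ℝ} (h : Vd (j + 1) t s) (hz : s (j + 1) = 0) :
    PathSeq (3 * j + 2) (XX (j + 1) t s) := by
  obtain ⟨h1, h2, h3⟩ := XX_path h
  refine ⟨h1, h2, fun n hn => ?_⟩
  by_cases c : n = 3 * (j + 1)
  · rw [c, XX_0 _ _ _ _ le_rfl, hz]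
  · exact h3 n (by omega)

def OkB.mk2 {j : ℕ} {t t' s s' : ℕ → ℝ} (h : OkB j t t' s s') : K2s (3 * j + 2) :=
  ⟨(XX (j + 1) t s, XX (j + 1) t' s'), OkB.mem1 h.v h.z, OkB.mem1 h.v' h.z', by
    dsimp only; rw [XX_z, XX_z, h.h0], by
    dsimp only; rw [XX_2 _ _ _ _ (Nat.lt_succ_self j), XX_2 _ _ _ _ (Nat.lt_succ_self j), h.z, h.z']
    rcases h.cr with h | h
    · left; exact max_eq_right (by linarith)
    · right; exact max_eq_right (by linarith)⟩

lemma PathSeq.up {j : ℕ} {x : ℕ → ℝ} (h : PathSeq (3 * j + 2) x) : PathSeq (3 * (j + 1)) x :=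
  ⟨h.1, h.2.1, fun n hn => h.2.2 n (by omega)⟩

lemma okB_of (j : ℕ) (p : K2s (3 * j + 2)) : OkB j (tt p.1.1) (tt p.1.2) (ss p.1.1) (ss p.1.2) := by
  obtain ⟨⟨x, y⟩, hx, hy, h0, hr⟩ := p
  refine ⟨Vd_tt hx.up, Vd_tt hy.up, hx.2.2 _ (by omega), hy.2.2 _ (by omega), h0, ?_⟩
  dsimp only at hr ⊢
  simp only [tt, ss]
  have a := hx.1 (3 * j + 1)
  have b := hy.1 (3 * j + 1)
  have a' := hx.1 (3 * j + 3)
  have b' := hy.1 (3 * j + 3)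
  rcases hr with h | h
  · left; linarith
  · right; linarith

def SB (J : ℕ) (t t' : ℕ → ℝ) (i : ℕ) : ℝ := max (-(max (TS t J) (TS t' J)) + TS t i) 0

lemma TS_congr {t t' : ℕ → ℝ} {J : ℕ} (h : ∀ i, i < J → t i = t' i) (i : ℕ) (hi : i ≤ J) :
    TS t i = TS t' i :=
  Finset.sum_congr rfl fun l hl => h l (lt_of_lt_of_le (Finset.mem_range.1 hl) hi)

lemma SB_congr {J : ℕ} {t t' u u' : ℕ → ℝ} (h : ∀ i, i < J → t i = u i) (h' : ∀ i, i < J → t' i = u' i)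
    (i : ℕ) (hi : i ≤ J) : SB J t t' i = SB J u u' i := by
  unfold SB
  rw [TS_congr h i hi, TS_congr h J le_rfl, TS_congr h' J le_rfl]

lemma okB_SB (j : ℕ) (t t' : ℕ → ℝ) : OkB j t t' (SB (j + 1) t t') (SB (j + 1) t' t) := by
  refine ⟨Vd.lin _ _ _, Vd.lin _ _ _, ?_, ?_, ?_, ?_⟩
  · exact max_eq_right (by linarith [le_max_left (TS t (j + 1)) (TS t' (j + 1))])
  · exact max_eq_right (by linarith [le_max_left (TS t' (j + 1)) (TS t (j + 1))])
  · unfold SB; rw [max_comm (TS t _)]; simp [TS]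
  · have e : TS t (j + 1) = TS t j + t j := Finset.sum_range_succ _ _
    have e' : TS t' (j + 1) = TS t' j + t' j := Finset.sum_range_succ _ _
    unfold SB
    rcases le_total (TS t (j + 1)) (TS t' (j + 1)) with c | c
    · right; rw [max_eq_left c]
      linarith [le_max_left (-TS t' (j + 1) + TS t' j) 0]
    · left; rw [max_eq_left c]
      linarith [le_max_left (-TS t (j + 1) + TS t j) 0]

def NB (J : ℕ) (t t' s s' : ℕ → ℝ) : ℝ := N2 J s s' + N2 J (SB J t t') (SB J t' t)

lemma NB_comm (J : ℕ) (t t' s s' : ℕ → ℝ) : NB J t t' s s' = NB J t' t s' s := by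
  unfold NB; rw [N2_comm, N2_comm J (SB J t t')]

def SL (J : ℕ) (t t' s s' : ℕ → ℝ) (l : ℝ) (i : ℕ) : ℝ :=
  max (max (s i - NB J t t' s s' * max 0 (2 * l - 1)) 0)
    (max (SB J t t' i - NB J t t' s s' * max 0 (1 - 2 * l)) 0)

lemma okB_SL {j : ℕ} {t t' s s' : ℕ → ℝ} (h : OkB j t t' s s') (l : ℝ) :
    OkB j t t' (SL (j + 1) t t' s s' l) (SL (j + 1) t' t s' s l) := by
  have hB := okB_SB j t t'
  have n0 : 0 ≤ NB (j + 1) t t' s s' := add_nonneg (N2_nonneg h.v.1 h.v'.1) (N2_nonneg hB.v.1 hB.v'.1)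
  have n1 : 0 ≤ NB (j + 1) t t' s s' * max 0 (2 * l - 1) := mul_nonneg n0 (le_max_left _ _)
  have n2 : 0 ≤ NB (j + 1) t t' s s' * max 0 (1 - 2 * l) := mul_nonneg n0 (le_max_left _ _)
  have ec := NB_comm (j + 1) t t' s s'
  refine ⟨(h.v.sub n1).sup (hB.v.sub n2), (h.v'.sub (ec ▸ n1)).sup (hB.v'.sub (ec ▸ n2)), ?_, ?_, ?_, ?_⟩
  · unfold SL; rw [h.z, hB.z, max_eq_right (a := 0 - _ * max 0 (2 * l - 1)) (by linarith), max_eq_right (a := 0 - _ * max 0 (1 - 2 * l)) (by linarith), max_self]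
  · unfold SL; rw [← ec, h.z', hB.z', max_eq_right (a := 0 - _ * max 0 (2 * l - 1)) (by linarith), max_eq_right (a := 0 - _ * max 0 (1 - 2 * l)) (by linarith), max_self]
  · unfold SL; rw [← ec, h.h0, hB.h0]
  · rcases le_total l (1 / 2) with c | c
    · have e0 : max 0 (2 * l - 1) = 0 := max_eq_left (by linarith)
      have b1 : s j ≤ SL (j + 1) t t' s s' l j := by
        unfold SL; rw [e0, mul_zero, sub_zero]; exact le_max_of_le_left (le_max_left _ _)
      have b2 : s' j ≤ SL (j + 1) t' t s' s l j := by
        unfold SL; rw [e0, mul_zero, sub_zero]; exact le_max_of_le_left (le_max_left _ _)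
      rcases h.cr with h | h
      · left; linarith
      · right; linarith
    · have e0 : max 0 (1 - 2 * l) = 0 := max_eq_left (by linarith)
      have b1 : SB (j + 1) t t' j ≤ SL (j + 1) t t' s s' l j := by
        unfold SL; rw [e0, mul_zero, sub_zero]; exact le_max_of_le_right (le_max_left _ _)
      have b2 : SB (j + 1) t' t j ≤ SL (j + 1) t' t s' s l j := by
        unfold SL; rw [e0, mul_zero, sub_zero]; exact le_max_of_le_right (le_max_left _ _)
      rcases hB.cr with h | h
      · left; linarith
      · right; linarith

lemma SL_zero {j : ℕ} {t t' s s' : ℕ → ℝ} (h : OkB j t t' s s') (i : ℕ) (hi : i ≤ j + 1) :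
    SL (j + 1) t t' s s' 0 i = s i := by
  have hB := okB_SB j t t'
  have a := N2_le1 (j := j + 1) hB.v.1 hB.v'.1 hi
  have b := N2_nonneg (j := j + 1) h.v.1 h.v'.1
  have c := h.v.1 i
  unfold SL
  rw [show max 0 (2 * (0 : ℝ) - 1) = 0 by norm_num, show max 0 (1 - 2 * (0 : ℝ)) = 1 by norm_num,
    mul_zero, sub_zero, mul_one, max_eq_left c, max_eq_right (a := SB (j + 1) t t' i - _) (by unfold NB; linarith)]
  exact max_eq_left c

lemma SL_one {j : ℕ} {t t' s s' : ℕ → ℝ} (h : OkB j t t' s s') (i : ℕ) (hi : i ≤ j + 1) :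
    SL (j + 1) t t' s s' 1 i = SB (j + 1) t t' i := by
  have hB := okB_SB j t t'
  have a := N2_le1 (j := j + 1) h.v.1 h.v'.1 hi
  have b := N2_nonneg (j := j + 1) hB.v.1 hB.v'.1
  have c := hB.v.1 i
  unfold SL
  rw [show max 0 (2 * (1 : ℝ) - 1) = 1 by norm_num, show max 0 (1 - 2 * (1 : ℝ)) = 0 by norm_num,
    mul_zero, sub_zero, mul_one, max_eq_left c, max_eq_right (a := s i - _) (by unfold NB; linarith)]
  exact max_eq_right c

lemma SB_continuous {Y : Type} [TopologicalSpace Y] (J : ℕ) (t t' : Y → ℕ → ℝ)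
    (ht : ∀ n, Continuous fun y => t y n) (ht' : ∀ n, Continuous fun y => t' y n) (i : ℕ) :
    Continuous fun y => SB J (t y) (t' y) i := by
  unfold SB
  have a := TS_continuous t ht J
  have b := TS_continuous t' ht' J
  have c := TS_continuous t ht i
  fun_prop

lemma SL_continuous {Y : Type} [TopologicalSpace Y] (J : ℕ) (t t' s s' : Y → ℕ → ℝ) (l : Y → ℝ)
    (ht : ∀ n, Continuous fun y => t y n) (ht' : ∀ n, Continuous fun y => t' y n)
    (hs : ∀ n, Continuous fun y => s y n) (hs' : ∀ n, Continuous fun y => s' y n) (hl : Continuous l) (i : ℕ) :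
    Continuous fun y => SL J (t y) (t' y) (s y) (s' y) (l y) i := by
  unfold SL NB
  have a := N2_continuous J s s' hs hs'
  have b := N2_continuous J _ _ (SB_continuous J t t' ht ht') (SB_continuous J t' t ht' ht)
  have c := SB_continuous J t t' ht ht' i
  have d := hs i
  fun_prop

theorem caseB (j : ℕ) : CE (K2 (3 * j + 2)) (RR (j + 1)) := by
  let f : K2s (3 * j + 2) → (RR (j + 1)).X := fun p => (fun i => tt p.1.1 i, fun i => tt p.1.2 i)
  let g : (RR (j + 1)).X → K2s (3 * j + 2) := fun q => (okB_SB j (ext q.1) (ext q.2)).mk2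
  have cf : Continuous f := by
    refine Continuous.prodMk ?_ ?_
    · exact continuous_pi fun i => tt_continuous _ (K2_cont1 _) _
    · exact continuous_pi fun i => tt_continuous _ (K2_cont2 _) _
  have cg : Continuous g := by
    have e1 := ext_continuous _ (continuous_fst (X := Fin (j + 1) → ℝ) (Y := Fin (j + 1) → ℝ))
    have e2 := ext_continuous _ (continuous_snd (X := Fin (j + 1) → ℝ) (Y := Fin (j + 1) → ℝ))
    refine Continuous.subtype_mk (Continuous.prodMk ?_ ?_) _
    · exact XX_continuous _ _ _ e1 (SB_continuous _ _ _ e1 e2)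
    · exact XX_continuous _ _ _ e2 (SB_continuous _ _ _ e2 e1)
  have fz : ∀ p : K2s (3 * j + 2), (∀ i, i < j + 1 → tt p.1.1 i = 0) → (∀ i, i < j + 1 → tt p.1.2 i = 0) →
      p = (K2 (3 * j + 2)).z := by
    intro p h1 h2
    have h := okB_of j p
    have a := h.v.const h1 _ le_rfl
    have b := h.v'.const h2 _ le_rfl
    rw [h.z] at a
    rw [h.z'] at b
    exact K2s_ext (p.2.1.up.eq_zero h1 a.symm) (p.2.2.1.up.eq_zero h2 b.symm)
  have fg : ∀ q, f (g q) = q := by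
    intro q
    refine Prod.ext ?_ ?_
    · funext i; exact (tt_XX (j + 1) (ext q.1) (SB (j + 1) (ext q.1) (ext q.2)) i i.2).trans (ext_lt q.1 i i.2)
    · funext i; exact (tt_XX (j + 1) (ext q.2) (SB (j + 1) (ext q.2) (ext q.1)) i i.2).trans (ext_lt q.2 i i.2)
  refine ⟨f, g, cf, cg, fun _ => rfl, fun _ => rfl, ?_, ?_, ?_, Defo.refl _ _ fg⟩
  · intro p hp
    exact fz p (fun i hi => congrFun (congrArg Prod.fst hp) ⟨i, hi⟩)
      (fun i hi => congrFun (congrArg Prod.snd hp) ⟨i, hi⟩)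
  · intro q hq
    rw [← fg q, hq]
    refine Prod.ext ?_ ?_ <;> funext i <;> show tt (fun _ => 0) i = 0 <;> simp [tt]
  · let H : unitInterval × K2s (3 * j + 2) → K2s (3 * j + 2) := fun q => (okB_SL (okB_of j q.2) q.1).mk2
    refine ⟨H, ?_, ?_, ?_, ?_, ?_⟩
    · have e1 := fun n => (K2_cont1 (3 * j + 2) n).comp (continuous_snd (X := unitInterval))
      have e2 := fun n => (K2_cont2 (3 * j + 2) n).comp (continuous_snd (X := unitInterval))
      have el : Continuous fun q : unitInterval × K2s (3 * j + 2) => (q.1 : ℝ) := by fun_prop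
      refine Continuous.subtype_mk (Continuous.prodMk ?_ ?_) _
      · exact XX_continuous _ _ _ (tt_continuous _ e1) (SL_continuous _ _ _ _ _ _ (tt_continuous _ e1)
          (tt_continuous _ e2) (fun n => e1 _) (fun n => e2 _) el)
      · exact XX_continuous _ _ _ (tt_continuous _ e2) (SL_continuous _ _ _ _ _ _ (tt_continuous _ e2)
          (tt_continuous _ e1) (fun n => e2 _) (fun n => e1 _) el)
    · intro p
      have h := okB_of j p
      refine K2s_ext ?_ ?_
      · conv_rhs => rw [← XX_tt p.2.1.up]
        exact XX_congr (j + 1) (tt p.1.1) (SL (j + 1) (tt p.1.1) (tt p.1.2) (ss p.1.1) (ss p.1.2) (0 : unitInterval)) _ _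
          (fun _ _ => rfl) (SL_zero h)
      · conv_rhs => rw [← XX_tt p.2.2.1.up]
        exact XX_congr (j + 1) (tt p.1.2) (SL (j + 1) (tt p.1.2) (tt p.1.1) (ss p.1.2) (ss p.1.1) (0 : unitInterval)) _ _
          (fun _ _ => rfl) (SL_zero h.swap)
    · intro p
      have h := okB_of j p
      have g1 : ∀ i, i < j + 1 → tt p.1.1 i = ext (f p).1 i := fun i hi => (ext_lt (f p).1 _ hi).symm
      have g2 : ∀ i, i < j + 1 → tt p.1.2 i = ext (f p).2 i := fun i hi => (ext_lt (f p).2 _ hi).symm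
      refine K2s_ext ?_ ?_
      · exact XX_congr (j + 1) (tt p.1.1) (SL (j + 1) (tt p.1.1) (tt p.1.2) (ss p.1.1) (ss p.1.2) (1 : unitInterval))
          (ext (f p).1) (SB (j + 1) (ext (f p).1) (ext (f p).2))
          g1 (fun i hi => (SL_one h i hi).trans (SB_congr g1 g2 i hi))
      · exact XX_congr (j + 1) (tt p.1.2) (SL (j + 1) (tt p.1.2) (tt p.1.1) (ss p.1.2) (ss p.1.1) (1 : unitInterval))
          (ext (f p).2) (SB (j + 1) (ext (f p).2) (ext (f p).1))
          g2 (fun i hi => (SL_one h.swap i hi).trans (SB_congr g2 g1 i hi))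
    · intro l p
      rfl
    · intro l p hp
      have a1 := congrArg (fun q : K2s (3 * j + 2) => q.1.1) hp
      have a2 := congrArg (fun q : K2s (3 * j + 2) => q.1.2) hp
      have z0 : ∀ i, tt (fun _ => 0) i = 0 := fun i => by simp [tt]
      refine fz p (fun i hi => ?_) (fun i hi => ?_)
      · rw [← tt_XX (j + 1) (tt p.1.1) (SL (j + 1) (tt p.1.1) (tt p.1.2) (ss p.1.1) (ss p.1.2) l) i hi]
        exact (congrArg (fun x => tt x i) a1).trans (z0 i)
      · rw [← tt_XX (j + 1) (tt p.1.2) (SL (j + 1) (tt p.1.2) (tt p.1.1) (ss p.1.2) (ss p.1.1) l) i hi]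
        exact (congrArg (fun x => tt x i) a2).trans (z0 i)


abbrev TTs : Type := {p : ℝ × ℝ × ℝ // 0 ≤ p.1 ∧ 0 ≤ p.2.1 ∧ 0 ≤ p.2.2 ∧ (p.1 = 0 ∨ p.2.1 = 0) ∧
  (p.1 = 0 ∨ p.2.2 = 0) ∧ (p.2.1 = 0 ∨ p.2.2 = 0)}

def TTs.swap (p : TTs) : TTs := ⟨(p.1.1, p.1.2.2, p.1.2.1), p.2.1, p.2.2.2.1, p.2.2.1, p.2.2.2.2.2.1, p.2.2.2.2.1,
  p.2.2.2.2.2.2.symm⟩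

lemma TTs.swap_continuous : Continuous TTs.swap := by
  apply Continuous.subtype_mk
  fun_prop

def TTs.zero : TTs := ⟨(0, 0, 0), le_rfl, le_rfl, le_rfl, Or.inl rfl, Or.inl rfl, Or.inl rfl⟩

lemma TTs.ext' {p q : TTs} (h1 : p.1.1 = q.1.1) (h2 : p.1.2.1 = q.1.2.1) (h3 : p.1.2.2 = q.1.2.2) : p = q :=
  Subtype.ext (Prod.ext h1 (Prod.ext h2 h3))

def TR (j : ℕ) : ZC where
  X := TTs × ((Fin j → ℝ) × (Fin j → ℝ))
  z := (TTs.zero, 0, 0)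
  τ := fun p => (p.1.swap, p.2.2, p.2.1)
  cτ := by
    have := TTs.swap_continuous
    fun_prop
  invol := fun _ => rfl
  τz := rfl

def AB (j : ℕ) (t t' : ℕ → ℝ) : ℝ := ∑ i ∈ Finset.range j, (|t i| + |t' i|)

lemma AB_comm (j : ℕ) (t t' : ℕ → ℝ) : AB j t t' = AB j t' t :=
  Finset.sum_congr rfl fun i _ => add_comm _ _

lemma AB_nonneg (j : ℕ) (t t' : ℕ → ℝ) : 0 ≤ AB j t t' :=
  Finset.sum_nonneg fun i _ => add_nonneg (abs_nonneg _) (abs_nonneg _)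

lemma AB_congr {j : ℕ} {t t' u u' : ℕ → ℝ} (h : ∀ i, i < j → t i = u i) (h' : ∀ i, i < j → t' i = u' i) :
    AB j t t' = AB j u u' :=
  Finset.sum_congr rfl fun i hi => by rw [h i (Finset.mem_range.1 hi), h' i (Finset.mem_range.1 hi)]

lemma AB_zero {j : ℕ} {t t' : ℕ → ℝ} (h : ∀ i, i < j → t i = 0) (h' : ∀ i, i < j → t' i = 0) :
    AB j t t' = 0 :=
  Finset.sum_eq_zero fun i hi => by rw [h i (Finset.mem_range.1 hi), h' i (Finset.mem_range.1 hi)]; simp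

lemma AB_continuous {Y : Type} [TopologicalSpace Y] (j : ℕ) (t t' : Y → ℕ → ℝ)
    (ht : ∀ n, Continuous fun y => t y n) (ht' : ∀ n, Continuous fun y => t' y n) :
    Continuous fun y => AB j (t y) (t' y) :=
  continuous_finsetSum _ fun i _ => (ht i).abs.add (ht' i).abs

lemma abs_le_AB (j : ℕ) (t t' : ℕ → ℝ) (i : ℕ) (hi : i ≤ j) : ∑ l ∈ Finset.range i, |t l| ≤ AB j t t' := by
  calc ∑ l ∈ Finset.range i, |t l| ≤ ∑ l ∈ Finset.range j, |t l| :=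
        Finset.sum_le_sum_of_subset_of_nonneg (Finset.range_mono hi) fun _ _ _ => abs_nonneg _
    _ ≤ _ := Finset.sum_le_sum fun l _ => by linarith [abs_nonneg (t' l)]

lemma abs_TS (t : ℕ → ℝ) (i : ℕ) : |TS t i| ≤ ∑ l ∈ Finset.range i, |t l| :=
  Finset.abs_sum_le_sum_abs _ _

lemma Vd.big {j : ℕ} {t s : ℕ → ℝ} (h : Vd j t s) (t' : ℕ → ℝ) (hs : AB j t t' < s 0) :
    ∀ i, i ≤ j → s i = s 0 + TS t i := by
  intro i
  induction i with
  | zero => intro _; simp [TS]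
  | succ i ih =>
    intro hi
    have ih := ih (by omega)
    have e : TS t (i + 1) = TS t i + t i := Finset.sum_range_succ _ _
    have b1 := (abs_le.1 ((abs_TS t i).trans (abs_le_AB j t t' i (by omega)))).1
    have b2 := (abs_le.1 ((abs_TS t (i + 1)).trans (abs_le_AB j t t' (i + 1) hi))).1
    obtain ⟨h1, h2⟩ := h.2 i hi
    have h1 := h1.resolve_left (by linarith)
    have h2 := h2.resolve_left (by linarith)
    linarith

lemma Vd.small {j : ℕ} {t s : ℕ → ℝ} (h : Vd j t s) :
    ∀ i, i ≤ j → s i ≤ s 0 + ∑ l ∈ Finset.range i, |t l| := by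
  intro i
  induction i with
  | zero => intro _; simp
  | succ i ih =>
    intro hi
    have ih := ih (by omega)
    rw [Finset.sum_range_succ]
    have := le_abs_self (t i)
    have p := h.1 i
    have p0 := h.1 0
    have q : 0 ≤ ∑ l ∈ Finset.range i, |t l| := Finset.sum_nonneg fun _ _ => abs_nonneg _
    rcases (h.2 i hi).2 with h2 | h2
    · rw [h2]; linarith [abs_nonneg (t i)]
    · linarith

lemma Vd.gf {j : ℕ} {t s : ℕ → ℝ} (h : Vd j t s) (t' : ℕ → ℝ) (i : ℕ) (hi : i ≤ j) :
    max (max (s 0 - AB j t t') 0 + TS t i - AB j t t') 0 = max (s i - 2 * AB j t t') 0 := by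
  rcases lt_or_ge (AB j t t') (s 0) with c | c
  · rw [max_eq_left (a := s 0 - _) (by linarith), h.big t' c i hi]; ring_nf
  · have b := (abs_le.1 ((abs_TS t i).trans (abs_le_AB j t t' i hi))).2
    have b' := h.small i hi
    have b2 := abs_le_AB j t t' i hi
    rw [max_eq_right (a := s 0 - _) (by linarith), max_eq_right (by linarith), max_eq_right (by linarith)]

def cons' (a : ℝ) (u : ℕ → ℝ) : ℕ → ℝ
  | 0 => a
  | n + 1 => u n

def tl (x : ℕ → ℝ) (n : ℕ) : ℝ := x (n + 1)

lemma cons'_tl (x : ℕ → ℝ) : cons' (x 0) (tl x) = x := by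
  funext n; cases n <;> rfl

lemma cons'_continuous {Y : Type} [TopologicalSpace Y] (a : Y → ℝ) (u : Y → ℕ → ℝ) (ha : Continuous a)
    (hu : Continuous u) : Continuous fun y => cons' (a y) (u y) := by
  refine continuous_pi fun n => ?_
  cases n with
  | zero => exact ha
  | succ n => exact (continuous_apply n).comp hu

lemma PathSeq.cons' {r : ℕ} {a : ℝ} {u : ℕ → ℝ} (ha : 0 ≤ a) (h : PathSeq r u) (h0 : a = 0 ∨ u 0 = 0) :
    PathSeq (r + 1) (cons' a u) := by
  refine ⟨fun n => ?_, fun n => ?_, fun n hn => ?_⟩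
  · cases n
    · exact ha
    · exact h.1 _
  · cases n
    · exact h0
    · exact h.2.1 _
  · cases n
    · omega
    · exact h.2.2 _ (by omega)

lemma PathSeq.tl {r : ℕ} {x : ℕ → ℝ} (h : PathSeq (r + 1) x) : PathSeq r (tl x) :=
  ⟨fun n => h.1 _, fun n => h.2.1 _, fun n hn => h.2.2 _ (by omega)⟩

structure OkC (j : ℕ) (a : ℝ) (t t' s s' : ℕ → ℝ) : Prop where
  a0 : 0 ≤ a
  v : Vd j t s
  v' : Vd j t' s'
  z : a = 0 ∨ s 0 = 0
  z' : a = 0 ∨ s' 0 = 0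
  cr : s j = 0 ∨ s' j = 0

lemma OkC.swap {j : ℕ} {a : ℝ} {t t' s s' : ℕ → ℝ} (h : OkC j a t t' s s') : OkC j a t' t s' s :=
  ⟨h.a0, h.v', h.v, h.z', h.z, h.cr.symm⟩

def OkC.mk2 {j : ℕ} {a : ℝ} {t t' s s' : ℕ → ℝ} (h : OkC j a t t' s s') : K2s (3 * j + 1) :=
  ⟨(cons' a (XX j t s), cons' a (XX j t' s')), (XX_path h.v).cons' h.a0 (by rw [XX_z]; exact h.z),
    (XX_path h.v').cons' h.a0 (by rw [XX_z]; exact h.z'), rfl, by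
      show XX j t s (3 * j) = 0 ∨ XX j t' s' (3 * j) = 0
      rw [XX_0 _ _ _ _ le_rfl, XX_0 _ _ _ _ le_rfl]; exact h.cr⟩

lemma okC_of (j : ℕ) (p : K2s (3 * j + 1)) :
    OkC j (p.1.1 0) (tt (tl p.1.1)) (tt (tl p.1.2)) (ss (tl p.1.1)) (ss (tl p.1.2)) := by
  refine ⟨p.2.1.1 _, Vd_tt p.2.1.tl, Vd_tt p.2.2.1.tl, p.2.1.2.1 0, ?_, p.2.2.2.2⟩
  rw [p.2.2.2.1]; exact p.2.2.1.2.1 0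

lemma OkC.sub {j : ℕ} {a : ℝ} {t t' s s' : ℕ → ℝ} (h : OkC j a t t' s s') {c : ℝ} (hc : 0 ≤ c) :
    OkC j a t t' (fun i => max (s i - c) 0) (fun i => max (s' i - c) 0) := by
  refine ⟨h.a0, h.v.sub hc, h.v'.sub hc, h.z.imp_right fun e => ?_, h.z'.imp_right fun e => ?_,
    h.cr.imp (fun e => ?_) (fun e => ?_)⟩ <;> rw [e] <;> exact max_eq_right (by linarith)

def SC (j : ℕ) (e : ℝ) (t t' : ℕ → ℝ) (i : ℕ) : ℝ := max (e + TS t i - AB j t t') 0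

lemma SC_Vd (j : ℕ) (e : ℝ) (t t' : ℕ → ℝ) : Vd j t (SC j e t t') := by
  have : SC j e t t' = fun i => max (e - AB j t t' + TS t i) 0 := by
    funext i; unfold SC; congr 1; ring
  rw [this]; exact Vd.lin _ _ _

lemma SC_z (j : ℕ) (t t' : ℕ → ℝ) (i : ℕ) (hi : i ≤ j) : SC j 0 t t' i = 0 := by
  have b := (abs_le.1 ((abs_TS t i).trans (abs_le_AB j t t' i hi))).2
  exact max_eq_right (by linarith)

lemma okC_SC (j : ℕ) (q : TTs) (t t' : ℕ → ℝ) :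
    OkC j q.1.1 t t' (SC j q.1.2.1 t t') (SC j q.1.2.2 t' t) := by
  refine ⟨q.2.1, SC_Vd _ _ _ _, SC_Vd _ _ _ _, ?_, ?_, ?_⟩
  · rcases q.2.2.2.2.1 with h | h
    · exact Or.inl h
    · right; rw [h]; exact SC_z _ _ _ _ (Nat.zero_le _)
  · rcases q.2.2.2.2.2.1 with h | h
    · exact Or.inl h
    · right; rw [h]; exact SC_z _ _ _ _ (Nat.zero_le _)
  · rcases q.2.2.2.2.2.2 with h | h
    · left; rw [h]; exact SC_z _ _ _ _ le_rfl
    · right; rw [h]; exact SC_z _ _ _ _ le_rfl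

lemma SC_continuous {Y : Type} [TopologicalSpace Y] (j : ℕ) (e : Y → ℝ) (t t' : Y → ℕ → ℝ) (he : Continuous e)
    (ht : ∀ n, Continuous fun y => t y n) (ht' : ∀ n, Continuous fun y => t' y n) (i : ℕ) :
    Continuous fun y => SC j (e y) (t y) (t' y) i := by
  unfold SC
  have a := TS_continuous t ht i
  have b := AB_continuous j t t' ht ht'
  fun_prop

def TTs.sub (q : TTs) (c : ℝ) (hc : 0 ≤ c) : TTs :=
  ⟨(q.1.1, max (q.1.2.1 - c) 0, max (q.1.2.2 - c) 0), q.2.1, le_max_right _ _, le_max_right _ _, by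
    refine q.2.2.2.2.1.imp_right fun e => ?_
    dsimp only; rw [e]; exact max_eq_right (by linarith), by
    refine q.2.2.2.2.2.1.imp_right fun e => ?_
    dsimp only; rw [e]; exact max_eq_right (by linarith), by
    refine q.2.2.2.2.2.2.imp (fun e => ?_) (fun e => ?_) <;>
    dsimp only <;> rw [e] <;> exact max_eq_right (by linarith)⟩

theorem caseC (j : ℕ) : CE (K2 (3 * j + 1)) (TR j) := by
  have okf : ∀ p : K2s (3 * j + 1), max (p.1.1 1 - AB j (tt (tl p.1.1)) (tt (tl p.1.2))) 0 = 0 ∨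
      max (p.1.2 1 - AB j (tt (tl p.1.1)) (tt (tl p.1.2))) 0 = 0 := by
    intro p
    by_contra! hc
    obtain ⟨h1, h2⟩ := hc
    have h1 : AB j (tt (tl p.1.1)) (tt (tl p.1.2)) < ss (tl p.1.1) 0 := by
      by_contra! h; exact h1 (max_eq_right (by simp only [ss, tl] at h ⊢; linarith))
    have h2 : AB j (tt (tl p.1.2)) (tt (tl p.1.1)) < ss (tl p.1.2) 0 := by
      rw [AB_comm]
      by_contra! h; exact h2 (max_eq_right (by simp only [ss, tl] at h ⊢; linarith))
    have h := okC_of j p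
    have e1 := h.v.big _ h1 j le_rfl
    have e2 := h.v'.big _ h2 j le_rfl
    have b1 := (abs_le.1 ((abs_TS (tt (tl p.1.1)) j).trans (abs_le_AB j _ (tt (tl p.1.2)) j le_rfl))).1
    have b2 := (abs_le.1 ((abs_TS (tt (tl p.1.2)) j).trans (abs_le_AB j _ (tt (tl p.1.1)) j le_rfl))).1
    rcases h.cr with c | c <;> linarith
  let N : K2s (3 * j + 1) → ℝ := fun p => AB j (tt (tl p.1.1)) (tt (tl p.1.2))
  have N0 : ∀ p, 0 ≤ N p := fun p => AB_nonneg _ _ _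
  let f : K2s (3 * j + 1) → (TR j).X := fun p => (⟨(p.1.1 0, max (p.1.1 1 - N p) 0, max (p.1.2 1 - N p) 0),
      (okC_of j p).a0, le_max_right _ _, le_max_right _ _,
      (okC_of j p).z.imp_right fun e => max_eq_right (by
        have := N0 p; simp only [ss, tl] at e; rw [e]; linarith),
      (okC_of j p).z'.imp_right fun e => max_eq_right (by
        have := N0 p; simp only [ss, tl] at e; rw [e]; linarith), okf p⟩,
    fun i => tt (tl p.1.1) i, fun i => tt (tl p.1.2) i)
  let g : (TR j).X → K2s (3 * j + 1) := fun q => (okC_SC j q.1 (ext q.2.1) (ext q.2.2)).mk2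
  have ct1 : ∀ i, Continuous fun p : K2s (3 * j + 1) => tt (tl p.1.1) i :=
    tt_continuous _ (fun n => K2_cont1 _ (n + 1))
  have ct2 : ∀ i, Continuous fun p : K2s (3 * j + 1) => tt (tl p.1.2) i :=
    tt_continuous _ (fun n => K2_cont2 _ (n + 1))
  have cN : Continuous N := AB_continuous _ _ _ ct1 ct2
  have cf : Continuous f := by
    refine Continuous.prodMk ?_ (Continuous.prodMk ?_ ?_)
    · refine Continuous.subtype_mk (Continuous.prodMk (K2_cont1 _ _) (Continuous.prodMk ?_ ?_)) _
      · exact ((K2_cont1 _ _).sub cN).max continuous_const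
      · exact ((K2_cont2 _ _).sub cN).max continuous_const
    · exact continuous_pi fun i => ct1 _
    · exact continuous_pi fun i => ct2 _
  have cg : Continuous g := by
    have e1 : ∀ i, Continuous fun q : (TR j).X => ext q.2.1 i :=
      ext_continuous _ (continuous_fst.comp continuous_snd)
    have e2 : ∀ i, Continuous fun q : (TR j).X => ext q.2.2 i :=
      ext_continuous _ (continuous_snd.comp continuous_snd)
    have c0 : Continuous fun q : (TR j).X => q.1.1 := continuous_subtype_val.comp continuous_fst
    refine Continuous.subtype_mk (Continuous.prodMk ?_ ?_) _
    · refine cons'_continuous _ _ (continuous_fst.comp c0) ?_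
      exact XX_continuous _ _ _ e1 (SC_continuous _ _ _ _ (continuous_fst.comp (continuous_snd.comp c0)) e1 e2)
    · refine cons'_continuous _ _ (continuous_fst.comp c0) ?_
      exact XX_continuous _ _ _ e2 (SC_continuous _ _ _ _ (continuous_snd.comp (continuous_snd.comp c0)) e2 e1)
  have Nτ : ∀ p, N ((K2 (3 * j + 1)).τ p) = N p := fun p => AB_comm _ _ _
  have z0 : ∀ i, tt (fun _ => 0) i = 0 := fun i => by simp [tt]
  -- values on g
  have gt1 : ∀ q i, i < j → tt (tl (g q).1.1) i = ext q.2.1 i := fun q i hi =>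
    tt_XX j (ext q.2.1) (SC j q.1.1.2.1 (ext q.2.1) (ext q.2.2)) i hi
  have gt2 : ∀ q i, i < j → tt (tl (g q).1.2) i = ext q.2.2 i := fun q i hi =>
    tt_XX j (ext q.2.2) (SC j q.1.1.2.2 (ext q.2.2) (ext q.2.1)) i hi
  have Ng : ∀ q, N (g q) = AB j (ext q.2.1) (ext q.2.2) := fun q => AB_congr (gt1 q) (gt2 q)
  have g1 : ∀ q, (g q).1.1 1 = max (q.1.1.2.1 - AB j (ext q.2.1) (ext q.2.2)) 0 := by
    intro q
    show XX j (ext q.2.1) (SC j q.1.1.2.1 (ext q.2.1) (ext q.2.2)) 0 = _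
    rw [XX_z]; unfold SC; simp [TS]
  have g2 : ∀ q, (g q).1.2 1 = max (q.1.1.2.2 - AB j (ext q.2.1) (ext q.2.2)) 0 := by
    intro q
    show XX j (ext q.2.2) (SC j q.1.1.2.2 (ext q.2.2) (ext q.2.1)) 0 = _
    rw [XX_z]; unfold SC; rw [AB_comm]; simp [TS]
  have extz : ext (0 : Fin j → ℝ) = fun _ => 0 := by
    funext i; unfold ext; split_ifs <;> rfl
  have extz' : ∀ i, i < j → ext (0 : Fin j → ℝ) i = 0 := fun i _ => by rw [extz]
  refine ⟨f, g, cf, cg, ?_, ?_, ?_, ?_, ?_, ?_⟩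
  · intro p
    refine Prod.ext (TTs.ext' ?_ ?_ ?_) rfl
    · exact p.2.2.2.1.symm
    · show max (p.1.2 1 - N ((K2 (3 * j + 1)).τ p)) 0 = _; rw [Nτ]; rfl
    · show max (p.1.1 1 - N ((K2 (3 * j + 1)).τ p)) 0 = _; rw [Nτ]; rfl
  · intro q; rfl
  · intro p hp
    have h1 : ∀ i, i < j → tt (tl p.1.1) i = 0 := fun i hi =>
      congrFun (congrArg (fun q : (TR j).X => q.2.1) hp) ⟨i, hi⟩
    have h2 : ∀ i, i < j → tt (tl p.1.2) i = 0 := fun i hi =>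
      congrFun (congrArg (fun q : (TR j).X => q.2.2) hp) ⟨i, hi⟩
    have hN : N p = 0 := AB_zero h1 h2
    have e0 : p.1.1 0 = 0 := congrArg (fun q : (TR j).X => q.1.1.1) hp
    have e1 : max (p.1.1 1 - N p) 0 = 0 := congrArg (fun q : (TR j).X => q.1.1.2.1) hp
    have e2 : max (p.1.2 1 - N p) 0 = 0 := congrArg (fun q : (TR j).X => q.1.1.2.2) hp
    rw [hN, sub_zero, max_eq_left (p.2.1.1 _)] at e1
    rw [hN, sub_zero, max_eq_left (p.2.2.1.1 _)] at e2
    have u := p.2.1.tl.eq_zero h1 e1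
    have v := p.2.2.1.tl.eq_zero h2 e2
    refine K2s_ext ?_ ?_
    · rw [← cons'_tl p.1.1, u, e0]; funext n; cases n <;> rfl
    · rw [← cons'_tl p.1.2, v, ← p.2.2.2.1, e0]; funext n; cases n <;> rfl
  · intro q hq
    have a1 : ∀ i, i < j → ext q.2.1 i = 0 := fun i hi => by rw [← gt1 q i hi, hq]; exact z0 i
    have a2 : ∀ i, i < j → ext q.2.2 i = 0 := fun i hi => by rw [← gt2 q i hi, hq]; exact z0 i
    have hN : AB j (ext q.2.1) (ext q.2.2) = 0 := AB_zero a1 a2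
    have b1 := g1 q
    have b2 := g2 q
    rw [hN, sub_zero, hq] at b1 b2
    rw [max_eq_left q.1.2.2.1] at b1
    rw [max_eq_left q.1.2.2.2.1] at b2
    refine Prod.ext (TTs.ext' ?_ b1.symm b2.symm) (Prod.ext ?_ ?_)
    · exact congrArg (fun p : K2s (3 * j + 1) => p.1.1 0) hq
    · funext i; rw [← ext_lt q.2.1 i i.2]; exact a1 i i.2
    · funext i; rw [← ext_lt q.2.2 i i.2]; exact a2 i i.2
  · have hl : ∀ (l : unitInterval) p, 0 ≤ (l : ℝ) * (2 * N p) := fun l p =>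
      mul_nonneg l.2.1 (by have := N0 p; linarith)
    let H : unitInterval × K2s (3 * j + 1) → K2s (3 * j + 1) := fun q =>
      ((okC_of j q.2).sub (hl q.1 q.2)).mk2
    have Hid : ∀ (l : unitInterval) p, (l : ℝ) * (2 * N p) = 0 → H (l, p) = p := by
      intro l p h
      refine K2s_ext ?_ ?_
      · conv_rhs => rw [← cons'_tl p.1.1, ← XX_tt p.2.1.tl]
        show cons' (p.1.1 0) (XX j _ (fun i => max (ss (tl p.1.1) i - l * (2 * N p)) 0)) = _
        congr 1
        refine XX_congr _ _ _ _ _ (fun _ _ => rfl) fun i _ => ?_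
        rw [h, sub_zero]; exact max_eq_left (p.2.1.1 _)
      · conv_rhs => rw [← cons'_tl p.1.2, ← XX_tt p.2.2.1.tl, ← p.2.2.2.1]
        show cons' (p.1.1 0) (XX j _ (fun i => max (ss (tl p.1.2) i - l * (2 * N p)) 0)) = _
        congr 1
        refine XX_congr _ _ _ _ _ (fun _ _ => rfl) fun i _ => ?_
        rw [h, sub_zero]; exact max_eq_left (p.2.2.1.1 _)
    refine ⟨H, ?_, ?_, ?_, ?_, ?_⟩
    · have c0 : Continuous fun q : unitInterval × K2s (3 * j + 1) => q.2 := continuous_snd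
      have cl : Continuous fun q : unitInterval × K2s (3 * j + 1) => (q.1 : ℝ) * (2 * N q.2) :=
        (continuous_subtype_val.comp continuous_fst).mul (continuous_const.mul (cN.comp c0))
      refine Continuous.subtype_mk (Continuous.prodMk ?_ ?_) _
      · refine cons'_continuous _ _ ((K2_cont1 _ 0).comp c0) (XX_continuous _ _ _ (fun i => (ct1 i).comp c0) ?_)
        exact fun i => (((K2_cont1 _ _).comp c0).sub cl).max continuous_const
      · refine cons'_continuous _ _ ((K2_cont1 _ 0).comp c0) (XX_continuous _ _ _ (fun i => (ct2 i).comp c0) ?_)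
        exact fun i => (((K2_cont2 _ _).comp c0).sub cl).max continuous_const
    · intro p
      exact Hid 0 p (by simp)
    · intro p
      have h := okC_of j p
      have k1 : ∀ i, i < j → tt (tl p.1.1) i = ext (f p).2.1 i := fun i hi => (ext_lt (f p).2.1 _ hi).symm
      have k2 : ∀ i, i < j → tt (tl p.1.2) i = ext (f p).2.2 i := fun i hi => (ext_lt (f p).2.2 _ hi).symm
      refine K2s_ext ?_ ?_
      · show cons' (p.1.1 0) (XX j _ (fun i => max (ss (tl p.1.1) i - (1 : unitInterval) * (2 * N p)) 0)) =
          cons' (p.1.1 0) (XX j (ext (f p).2.1) (SC j (max (p.1.1 1 - N p) 0) (ext (f p).2.1) (ext (f p).2.2)))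
        congr 1
        refine XX_congr _ _ _ _ _ k1 fun i hi => ?_
        rw [Set.Icc.coe_one, one_mul]
        unfold SC
        rw [← TS_congr k1 i hi, ← AB_congr k1 k2]
        exact (h.v.gf _ i hi).symm
      · show cons' (p.1.1 0) (XX j _ (fun i => max (ss (tl p.1.2) i - (1 : unitInterval) * (2 * N p)) 0)) =
          cons' (p.1.1 0) (XX j (ext (f p).2.2) (SC j (max (p.1.2 1 - N p) 0) (ext (f p).2.2) (ext (f p).2.1)))
        congr 1
        refine XX_congr _ _ _ _ _ k2 fun i hi => ?_
        rw [Set.Icc.coe_one, one_mul]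
        unfold SC
        rw [← TS_congr k2 i hi, ← AB_congr k2 k1, show N p = AB j (tt (tl p.1.2)) (tt (tl p.1.1)) from AB_comm _ _ _]
        exact (h.v'.gf _ i hi).symm
    · intro l p
      refine K2s_ext ?_ ?_
      · show cons' (p.1.2 0) (XX j (tt (tl p.1.2)) (fun i => max (ss (tl p.1.2) i - l * (2 * N ((K2 (3 * j + 1)).τ p))) 0)) = _
        rw [Nτ, ← p.2.2.2.1]; rfl
      · show cons' (p.1.2 0) (XX j (tt (tl p.1.1)) (fun i => max (ss (tl p.1.1) i - l * (2 * N ((K2 (3 * j + 1)).τ p))) 0)) = _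
        rw [Nτ, ← p.2.2.2.1]; rfl
    · intro l p hp
      have a1 := congrArg (fun q : K2s (3 * j + 1) => tl q.1.1) hp
      have a2 := congrArg (fun q : K2s (3 * j + 1) => tl q.1.2) hp
      have h1 : ∀ i, i < j → tt (tl p.1.1) i = 0 := by
        intro i hi
        rw [← tt_XX j (tt (tl p.1.1)) (fun i => max (ss (tl p.1.1) i - l * (2 * N p)) 0) i hi]
        exact (congrArg (fun x => tt x i) a1).trans (z0 i)
      have h2 : ∀ i, i < j → tt (tl p.1.2) i = 0 := by
        intro i hi
        rw [← tt_XX j (tt (tl p.1.2)) (fun i => max (ss (tl p.1.2) i - l * (2 * N p)) 0) i hi]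
        exact (congrArg (fun x => tt x i) a2).trans (z0 i)
      have hN : N p = 0 := AB_zero h1 h2
      rw [← hp, Hid l p (by rw [hN]; ring)]
  · let M : (TR j).X → ℝ := fun q => AB j (ext q.2.1) (ext q.2.2)
    have Mτ : ∀ q, M ((TR j).τ q) = M q := fun q => AB_comm _ _ _
    have M0 : ∀ q, 0 ≤ M q := fun q => AB_nonneg _ _ _
    have hl : ∀ (l : unitInterval) p, 0 ≤ (l : ℝ) * (2 * M p) := fun l p =>
      mul_nonneg l.2.1 (by have := M0 p; linarith)
    let H : unitInterval × (TR j).X → (TR j).X := fun q => (q.2.1.sub _ (hl q.1 q.2), q.2.2)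
    have Hid : ∀ (l : unitInterval) q, (l : ℝ) * (2 * M q) = 0 → H (l, q) = q := by
      intro l q h
      refine Prod.ext (TTs.ext' rfl ?_ ?_) rfl
      · show max (q.1.1.2.1 - l * (2 * M q)) 0 = _
        rw [h, sub_zero]; exact max_eq_left q.1.2.2.1
      · show max (q.1.1.2.2 - l * (2 * M q)) 0 = _
        rw [h, sub_zero]; exact max_eq_left q.1.2.2.2.1
    have mm : ∀ (e N : ℝ), 0 ≤ N → max (e - (1 : unitInterval) * (2 * N)) 0 = max (max (e - N) 0 - N) 0 := by
      intro e N hN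
      rw [Set.Icc.coe_one, one_mul]
      rcases le_total (e - N) 0 with c | c
      · rw [max_eq_right c, max_eq_right (by linarith), max_eq_right (by linarith)]
      · rw [max_eq_left c]; congr 1; ring
    refine ⟨H, ?_, ?_, ?_, ?_, ?_⟩
    · have c0 : Continuous fun q : unitInterval × (TR j).X => q.2 := continuous_snd
      have c1 : Continuous fun q : unitInterval × (TR j).X => q.2.1.1 :=
        continuous_subtype_val.comp (continuous_fst.comp c0)
      have c2 : Continuous fun q : unitInterval × (TR j).X => q.2.2 := continuous_snd.comp c0
      have cM : Continuous fun q : unitInterval × (TR j).X => M q.2 :=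
        AB_continuous _ _ _ (ext_continuous _ (continuous_fst.comp c2)) (ext_continuous _ (continuous_snd.comp c2))
      have cl : Continuous fun q : unitInterval × (TR j).X => (q.1 : ℝ) * (2 * M q.2) :=
        (continuous_subtype_val.comp continuous_fst).mul (continuous_const.mul cM)
      refine Continuous.prodMk (Continuous.subtype_mk (Continuous.prodMk (continuous_fst.comp c1)
        (Continuous.prodMk ?_ ?_)) _) c2
      · exact ((continuous_fst.comp (continuous_snd.comp c1)).sub cl).max continuous_const
      · exact ((continuous_snd.comp (continuous_snd.comp c1)).sub cl).max continuous_const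
    · intro q; exact Hid 0 q (by simp)
    · intro q
      refine Prod.ext (TTs.ext' ?_ ?_ ?_) (Prod.ext ?_ ?_)
      · rfl
      · show max (q.1.1.2.1 - (1 : unitInterval) * (2 * M q)) 0 = max ((g q).1.1 1 - N (g q)) 0
        rw [g1, Ng, mm _ _ (M0 q)]
      · show max (q.1.1.2.2 - (1 : unitInterval) * (2 * M q)) 0 = max ((g q).1.2 1 - N (g q)) 0
        rw [g2, Ng, mm _ _ (M0 q)]
      · funext i; exact ((gt1 q i i.2).trans (ext_lt q.2.1 i i.2)).symm
      · funext i; exact ((gt2 q i i.2).trans (ext_lt q.2.2 i i.2)).symm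
    · intro l q
      refine Prod.ext (TTs.ext' rfl ?_ ?_) rfl
      · show max (q.1.1.2.2 - l * (2 * M ((TR j).τ q))) 0 = _; rw [Mτ]; rfl
      · show max (q.1.1.2.1 - l * (2 * M ((TR j).τ q))) 0 = _; rw [Mτ]; rfl
    · intro l q hq
      have e1 : q.2.1 = 0 := congrArg (fun q : (TR j).X => q.2.1) hq
      have e2 : q.2.2 = 0 := congrArg (fun q : (TR j).X => q.2.2) hq
      have hM : M q = 0 := AB_zero (fun i hi => by rw [e1]; exact extz' i hi) (fun i hi => by rw [e2]; exact extz' i hi)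
      rw [← hq, Hid l q (by rw [hM]; ring)]


abbrev ES (d : ℕ) : Type := EuclideanSpace ℝ (Fin (d + 1))

def EE (d : ℕ) : ZC where
  X := ES d × ES d
  z := 0
  τ := fun p => (p.1, -p.2)
  cτ := by fun_prop
  invol := fun p => by simp
  τz := by simp

theorem RR_EE (j n d : ℕ) (h : d + 1 = j * n) : CE ((RR j).pow n) (EE d) := by
  have hfr : Module.finrank ℝ (Fin n → Fin j → ℝ) = Module.finrank ℝ (ES d) := by
    rw [Module.finrank_pi_fintype]; simp [h, mul_comm]
  let L : (Fin n → Fin j → ℝ) ≃L[ℝ] ES d := ContinuousLinearEquiv.ofFinrankEq hfr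
  have c1 : Continuous fun w : ((RR j).pow n).X => (fun i => (w i).1 : Fin n → Fin j → ℝ) :=
    continuous_pi fun i => continuous_fst.comp (continuous_apply i)
  have c2 : Continuous fun w : ((RR j).pow n).X => (fun i => (w i).2 : Fin n → Fin j → ℝ) :=
    continuous_pi fun i => continuous_snd.comp (continuous_apply i)
  have cL := L.continuous
  have cL' := L.symm.continuous
  let f : ((RR j).pow n).X → (EE d).X := fun w =>
    (L ((fun i => (w i).1) + fun i => (w i).2), L ((fun i => (w i).1) - fun i => (w i).2))
  let g : (EE d).X → ((RR j).pow n).X := fun p i =>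
    (((1 / 2 : ℝ) • L.symm (p.1 + p.2)) i, ((1 / 2 : ℝ) • L.symm (p.1 - p.2)) i)
  refine CE.of_inv f g ?_ ?_ ?_ ?_ ?_ ?_
  · exact Continuous.prodMk (cL.comp (c1.add c2)) (cL.comp (c1.sub c2))
  · refine continuous_pi fun i => Continuous.prodMk ?_ ?_
    · have : Continuous fun a : ES d × ES d => (1 / 2 : ℝ) • L.symm (a.1 + a.2) := by fun_prop
      exact (continuous_apply i).comp this
    · have : Continuous fun a : ES d × ES d => (1 / 2 : ℝ) • L.symm (a.1 - a.2) := by fun_prop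
      exact (continuous_apply i).comp this
  · intro w
    refine Prod.ext ?_ ?_
    · show L ((fun i => (w i).2) + fun i => (w i).1) = L ((fun i => (w i).1) + fun i => (w i).2)
      exact congrArg L (add_comm _ _)
    · show L ((fun i => (w i).2) - fun i => (w i).1) = - L ((fun i => (w i).1) - fun i => (w i).2)
      rw [← map_neg, neg_sub]
  · intro w
    funext i
    have e1 : (1 / 2 : ℝ) • L.symm ((f w).1 + (f w).2) = fun i => (w i).1 := by
      simp only [f, map_add, ContinuousLinearEquiv.symm_apply_apply]
      module
    have e2 : (1 / 2 : ℝ) • L.symm ((f w).1 - (f w).2) = fun i => (w i).2 := by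
      simp only [f, map_sub, ContinuousLinearEquiv.symm_apply_apply]
      module
    refine Prod.ext ?_ ?_
    · exact congrFun e1 i
    · exact congrFun e2 i
  · intro p
    refine Prod.ext ?_ ?_
    · show L ((1 / 2 : ℝ) • L.symm (p.1 + p.2) + (1 / 2 : ℝ) • L.symm (p.1 - p.2)) = p.1
      simp only [map_add, map_smul, ContinuousLinearEquiv.apply_symm_apply]
      module
    · show L ((1 / 2 : ℝ) • L.symm (p.1 + p.2) - (1 / 2 : ℝ) • L.symm (p.1 - p.2)) = p.2
      simp only [map_sub, map_smul, ContinuousLinearEquiv.apply_symm_apply]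
      module
  · funext i
    refine Prod.ext ?_ ?_
    · show ((1 / 2 : ℝ) • L.symm (0 + 0)) i = 0
      simp
    · show ((1 / 2 : ℝ) • L.symm (0 - 0)) i = 0
      simp

abbrev SG (d : ℕ) : Type := {p : ES d × ES d // ‖p.1‖ + ‖p.2‖ = 1}

def SGτ (d : ℕ) : C(SG d, SG d) where
  toFun p := ⟨(p.1.1, -p.1.2), by rw [norm_neg]; exact p.2⟩
  continuous_toFun := by
    apply Continuous.subtype_mk
    fun_prop

lemma SGτ_invol (d : ℕ) : ∀ x, SGτ d (SGτ d x) = x := fun x =>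
  Subtype.ext (Prod.ext rfl (neg_neg _))

theorem EE_SG (d : ℕ) : Nonempty (ContinuousMap.HomotopyEquiv (EE d).Q (Z2Quotient (SG d) (SGτ d) (SGτ_invol d))) := by
  have pos : ∀ p : (EE d).nz, 0 < ‖p.1.1‖ + ‖p.1.2‖ := by
    intro p
    by_contra! h
    have a := norm_nonneg p.1.1
    have b := norm_nonneg p.1.2
    exact p.2 (Prod.ext (norm_eq_zero.1 (by linarith)) (norm_eq_zero.1 (by linarith)))
  have cv1 : Continuous fun p : (EE d).nz => (p.1.1 : ES d) := continuous_fst.comp continuous_subtype_val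
  have cv2 : Continuous fun p : (EE d).nz => (p.1.2 : ES d) := continuous_snd.comp continuous_subtype_val
  have cm : Continuous fun p : (EE d).nz => (‖p.1.1‖ + ‖p.1.2‖)⁻¹ :=
    (cv1.norm.add cv2.norm).inv₀ fun p => (pos p).ne'
  apply quotHE
  refine ⟨⟨fun p => ⟨((‖p.1.1‖ + ‖p.1.2‖)⁻¹ • p.1.1, (‖p.1.1‖ + ‖p.1.2‖)⁻¹ • p.1.2), ?_⟩, ?_⟩,
    ⟨fun p => ⟨p.1, ?_⟩, ?_⟩, ?_, ?_, ⟨⟨⟨fun q =>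
      ⟨(((1 - (q.1 : ℝ)) * (‖q.2.1.1‖ + ‖q.2.1.2‖)⁻¹ + q.1) • q.2.1.1, ((1 - (q.1 : ℝ)) * (‖q.2.1.1‖ + ‖q.2.1.2‖)⁻¹ + q.1) • q.2.1.2), ?_⟩, ?_⟩, ?_, ?_⟩, ?_⟩,
    ⟨⟨⟨fun q => q.2, continuous_snd⟩, ?_, ?_⟩, ?_⟩⟩
  · have := pos p
    dsimp only
    rw [norm_smul, norm_smul, ← mul_add, Real.norm_of_nonneg (by positivity), inv_mul_cancel₀ this.ne']
  · exact Continuous.subtype_mk (Continuous.prodMk (cm.smul cv1) (cm.smul cv2)) _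
  · intro h
    have := p.2
    rw [show p.1 = (0 : ES d × ES d) from h] at this
    simp at this
  · exact Continuous.subtype_mk continuous_subtype_val _
  · intro p
    refine Subtype.ext (Prod.ext ?_ ?_)
    · show (‖p.1.1‖ + ‖-p.1.2‖)⁻¹ • p.1.1 = (‖p.1.1‖ + ‖p.1.2‖)⁻¹ • p.1.1
      rw [norm_neg]
    · show (‖p.1.1‖ + ‖-p.1.2‖)⁻¹ • (-p.1.2) = -((‖p.1.1‖ + ‖p.1.2‖)⁻¹ • p.1.2)
      rw [norm_neg, smul_neg]
  · intro p; rfl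
  · intro h
    have hp := pos q.2
    have c : 0 < (1 - (q.1 : ℝ)) * (‖q.2.1.1‖ + ‖q.2.1.2‖)⁻¹ + q.1 := by
      have h0 := q.1.2.1
      have h1 := q.1.2.2
      rcases h0.eq_or_lt with e | e
      · rw [← e]; simp; positivity
      · have : 0 ≤ (1 - (q.1 : ℝ)) * (‖q.2.1.1‖ + ‖q.2.1.2‖)⁻¹ := mul_nonneg (by linarith) (by positivity)
        linarith
    exact q.2.2 (Prod.ext ((smul_eq_zero.1 (congrArg (fun p : ES d × ES d => p.1) h)).resolve_left c.ne')
      ((smul_eq_zero.1 (congrArg (fun p : ES d × ES d => p.2) h)).resolve_left c.ne'))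
  · refine Continuous.subtype_mk ?_ _
    have c1 : Continuous fun q : unitInterval × (EE d).nz => (q.1 : ℝ) := by fun_prop
    have c3 := (((continuous_const (y := (1 : ℝ))).sub c1).mul (cm.comp continuous_snd)).add c1
    exact (c3.smul (cv1.comp continuous_snd)).prodMk (c3.smul (cv2.comp continuous_snd))
  · intro p
    refine Subtype.ext (Prod.ext ?_ ?_)
    · show ((1 - ((0 : unitInterval) : ℝ)) * (‖p.1.1‖ + ‖p.1.2‖)⁻¹ + (0 : unitInterval)) • p.1.1 = (‖p.1.1‖ + ‖p.1.2‖)⁻¹ • p.1.1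
      simp
    · show ((1 - ((0 : unitInterval) : ℝ)) * (‖p.1.1‖ + ‖p.1.2‖)⁻¹ + (0 : unitInterval)) • p.1.2 = (‖p.1.1‖ + ‖p.1.2‖)⁻¹ • p.1.2
      simp
  · intro p
    refine Subtype.ext (Prod.ext ?_ ?_)
    · show ((1 - ((1 : unitInterval) : ℝ)) * (‖p.1.1‖ + ‖p.1.2‖)⁻¹ + (1 : unitInterval)) • p.1.1 = p.1.1
      simp
    · show ((1 - ((1 : unitInterval) : ℝ)) * (‖p.1.1‖ + ‖p.1.2‖)⁻¹ + (1 : unitInterval)) • p.1.2 = p.1.2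
      simp
  · intro p t
    refine Subtype.ext (Prod.ext ?_ ?_)
    · show ((1 - (t : ℝ)) * (‖p.1.1‖ + ‖-p.1.2‖)⁻¹ + t) • p.1.1 = ((1 - (t : ℝ)) * (‖p.1.1‖ + ‖p.1.2‖)⁻¹ + t) • p.1.1
      rw [norm_neg]
    · show ((1 - (t : ℝ)) * (‖p.1.1‖ + ‖-p.1.2‖)⁻¹ + t) • (-p.1.2) = -(((1 - (t : ℝ)) * (‖p.1.1‖ + ‖p.1.2‖)⁻¹ + t) • p.1.2)
      rw [norm_neg, smul_neg]
  · intro p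
    refine Subtype.ext (Prod.ext ?_ ?_)
    · show p.1.1 = (‖p.1.1‖ + ‖p.1.2‖)⁻¹ • p.1.1
      rw [p.2]; simp
    · show p.1.2 = (‖p.1.1‖ + ‖p.1.2‖)⁻¹ • p.1.2
      rw [p.2]; simp
  · intro p; rfl
  · intro p t; rfl


lemma involution_isOpenQuotientMap {X : Type} [TopologicalSpace X] (τ : C(X, X)) (hτ : ∀ x, τ (τ x) = x) :
    IsOpenQuotientMap (Quotient.mk (involutionSetoid τ hτ)) := by
  refine ⟨Quotient.mk_surjective, continuous_quotient_mk', fun U hU => ?_⟩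
  have : Quotient.mk (involutionSetoid τ hτ) ⁻¹' (Quotient.mk (involutionSetoid τ hτ) '' U) = U ∪ τ ⁻¹' U := by
    ext x
    constructor
    · rintro ⟨y, hy, e⟩
      rcases Quotient.exact e with h | h
      · left; rw [h]; exact hy
      · right; show τ x ∈ U; rw [h, hτ]; exact hy
    · rintro (h | h)
      · exact ⟨x, h, rfl⟩
      · exact ⟨τ x, h, Quotient.sound (Or.inr (hτ x).symm)⟩
  have h2 : IsOpen (Quotient.mk (involutionSetoid τ hτ) ⁻¹' (Quotient.mk (involutionSetoid τ hτ) '' U)) := by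
    rw [this]; exact hU.union (hU.preimage τ.continuous)
  exact h2

lemma homeo_of_quot {W Y Z : Type} [TopologicalSpace W] [TopologicalSpace Y] [TopologicalSpace Z]
    (p : W → Y) (q : W → Z) (hp : Topology.IsQuotientMap p) (hq : Topology.IsQuotientMap q)
    (h : ∀ a b, p a = p b ↔ q a = q b) : Nonempty (Y ≃ₜ Z) := by
  let P : C(W, Y) := ⟨p, hp.continuous⟩
  let Q : C(W, Z) := ⟨q, hq.continuous⟩
  have hP : Topology.IsQuotientMap P := hp
  have hQ : Topology.IsQuotientMap Q := hq
  let F : C(Y, Z) := hP.lift Q fun a b e => (h a b).1 e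
  let G : C(Z, Y) := hQ.lift P fun a b e => (h a b).2 e
  have hF : ∀ w, F (p w) = q w := fun w => ContinuousMap.congr_fun (hP.lift_comp Q fun a b e => (h a b).1 e) w
  have hG : ∀ w, G (q w) = p w := fun w => ContinuousMap.congr_fun (hQ.lift_comp P fun a b e => (h a b).2 e) w
  refine ⟨⟨⟨F, G, ?_, ?_⟩, F.continuous, G.continuous⟩⟩
  · intro y
    obtain ⟨w, rfl⟩ := hp.surjective y
    rw [hF, hG]
  · intro y
    obtain ⟨w, rfl⟩ := hq.surjective y
    rw [hG, hF]

def SGmap (d : ℕ) (w : nSphere d × nSphere d × unitInterval) : SG d :=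
  ⟨((1 - (w.2.2 : ℝ)) • w.1.1, (w.2.2 : ℝ) • w.2.1.1), by
    have h0 := w.2.2.2.1
    have h1 := w.2.2.2.2
    have a := w.1.2
    have b := w.2.1.2
    rw [Metric.mem_sphere, dist_zero_right] at a b
    dsimp only
    rw [norm_smul, norm_smul, a, b, Real.norm_of_nonneg h0, Real.norm_of_nonneg (by linarith)]; ring⟩

lemma nSphere_norm {d : ℕ} (x : nSphere d) : ‖x.1‖ = 1 := by
  have a := x.2
  rwa [Metric.mem_sphere, dist_zero_right] at a

lemma exists_sphere {d : ℕ} (a : ES d) : ∃ x : nSphere d, ‖a‖ • x.1 = a := by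
  by_cases h : a = 0
  · exact ⟨northPole d, by rw [h]; simp⟩
  · refine ⟨⟨‖a‖⁻¹ • a, ?_⟩, ?_⟩
    · rw [Metric.mem_sphere, dist_zero_right, norm_smul, norm_inv, norm_norm, inv_mul_cancel₀ (norm_ne_zero_iff.2 h)]
    · dsimp only; rw [smul_smul, mul_inv_cancel₀ (norm_ne_zero_iff.2 h), one_smul]

lemma SGmap_eq {d : ℕ} (x y x' y' : nSphere d) (θ θ' : unitInterval) :
    SGmap d (x, y, θ) = SGmap d (x', y', θ') ↔ θ = θ' ∧ (θ = 1 ∨ x = x') ∧ (θ = 0 ∨ y = y') := by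
  constructor
  · intro h
    have h1 : (1 - (θ : ℝ)) • x.1 = (1 - (θ' : ℝ)) • x'.1 := congrArg (fun p : SG d => p.1.1) h
    have h2 : (θ : ℝ) • y.1 = (θ' : ℝ) • y'.1 := congrArg (fun p : SG d => p.1.2) h
    have e : θ = θ' := by
      have := congrArg norm h2
      rw [norm_smul, norm_smul, nSphere_norm, nSphere_norm, Real.norm_of_nonneg θ.2.1, Real.norm_of_nonneg θ'.2.1] at this
      exact Subtype.ext (by linarith)
    subst e
    refine ⟨rfl, ?_, ?_⟩
    · by_cases c : θ = 1
      · exact Or.inl c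
      · right
        have c' : (1 - (θ : ℝ)) ≠ 0 := fun h => c (Subtype.ext (by rw [Set.Icc.coe_one]; linarith))
        exact Subtype.ext (smul_right_injective _ c' h1)
    · by_cases c : θ = 0
      · exact Or.inl c
      · right
        have c' : (θ : ℝ) ≠ 0 := fun h => c (Subtype.ext h)
        exact Subtype.ext (smul_right_injective _ c' h2)
  · rintro ⟨rfl, h1, h2⟩
    refine Subtype.ext (Prod.ext ?_ ?_)
    · show (1 - (θ : ℝ)) • x.1 = (1 - (θ : ℝ)) • x'.1
      rcases h1 with h | h
      · rw [h]; simp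
      · rw [h]
    · show (θ : ℝ) • y.1 = (θ : ℝ) • y'.1
      rcases h2 with h | h
      · rw [h]; simp
      · rw [h]

theorem SG_join (d : ℕ) : Nonempty (Z2Quotient (SG d) (SGτ d) (SGτ_invol d) ≃ₜ TopJoin (nSphere d) (RPspace d)) := by
  let p : nSphere d × nSphere d × unitInterval → Z2Quotient (SG d) (SGτ d) (SGτ_invol d) :=
    fun w => Quotient.mk _ (SGmap d w)
  let q1 : nSphere d × nSphere d × unitInterval → nSphere d × RPspace d × unitInterval :=
    Prod.map id (Prod.map (Quotient.mk _) id)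
  let q : nSphere d × nSphere d × unitInterval → TopJoin (nSphere d) (RPspace d) :=
    fun w => Quotient.mk _ (q1 w)
  have cG : Continuous (SGmap d) := by
    unfold SGmap
    apply Continuous.subtype_mk
    fun_prop
  have sG : Function.Surjective (SGmap d) := by
    rintro ⟨⟨a, b⟩, h⟩
    dsimp only at h
    obtain ⟨x, hx⟩ := exists_sphere a
    obtain ⟨y, hy⟩ := exists_sphere b
    refine ⟨(x, y, ⟨‖b‖, norm_nonneg _, by linarith [norm_nonneg a]⟩), ?_⟩
    refine Subtype.ext (Prod.ext ?_ ?_)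
    · show (1 - ‖b‖) • x.1 = a
      rw [show 1 - ‖b‖ = ‖a‖ by linarith, hx]
    · exact hy
  have qG : Topology.IsQuotientMap (SGmap d) := cG.isClosedMap.isQuotientMap cG sG
  have hp : Topology.IsQuotientMap p :=
    (involution_isOpenQuotientMap (SGτ d) (SGτ_invol d)).isQuotientMap.comp qG
  have hq1 : Topology.IsQuotientMap q1 :=
    (IsOpenQuotientMap.id.prodMap
      ((involution_isOpenQuotientMap (nSphereNeg d) (nSphereNeg_invol d)).prodMap IsOpenQuotientMap.id)).isQuotientMap
  have hq : Topology.IsQuotientMap q := isQuotientMap_quotient_mk'.comp hq1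
  refine homeo_of_quot p q hp hq ?_
  rintro ⟨x, y, θ⟩ ⟨x', y', θ'⟩
  have e1 : p (x, y, θ) = p (x', y', θ') ↔ θ = θ' ∧ (θ = 1 ∨ x = x') ∧ (θ = 0 ∨ y' = y ∨ y' = nSphereNeg d y) := by
    have en : SGτ d (SGmap d (x, y, θ)) = SGmap d (x, nSphereNeg d y, θ) :=
      Subtype.ext (Prod.ext rfl (smul_neg _ _).symm)
    have : p (x, y, θ) = p (x', y', θ') ↔ SGmap d (x', y', θ') = SGmap d (x, y, θ) ∨
        SGmap d (x', y', θ') = SGτ d (SGmap d (x, y, θ)) := Quotient.eq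
    rw [this, en, SGmap_eq, SGmap_eq]
    constructor
    · rintro (⟨rfl, h1, h2⟩ | ⟨rfl, h1, h2⟩)
      · exact ⟨rfl, h1.imp_right Eq.symm, h2.imp_right Or.inl⟩
      · exact ⟨rfl, h1.imp_right Eq.symm, h2.imp_right Or.inr⟩
    · rintro ⟨rfl, h1, h2 | h2 | h2⟩
      · exact Or.inl ⟨rfl, h1.imp_right Eq.symm, Or.inl h2⟩
      · exact Or.inl ⟨rfl, h1.imp_right Eq.symm, Or.inr h2⟩
      · exact Or.inr ⟨rfl, h1.imp_right Eq.symm, Or.inr h2⟩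
  have e3 : (Quotient.mk (involutionSetoid (nSphereNeg d) (nSphereNeg_invol d)) y = Quotient.mk _ y') ↔
      y' = y ∨ y' = nSphereNeg d y := Quotient.eq
  have e2 : q (x, y, θ) = q (x', y', θ') ↔
      q1 (x, y, θ) = q1 (x', y', θ') ∨ (θ = 0 ∧ θ' = 0 ∧ x = x') ∨ (θ = 1 ∧ θ' = 1 ∧
        Quotient.mk (involutionSetoid (nSphereNeg d) (nSphereNeg_invol d)) y = Quotient.mk _ y') := Quotient.eq
  have e4 : q1 (x, y, θ) = q1 (x', y', θ') ↔ x = x' ∧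
      Quotient.mk (involutionSetoid (nSphereNeg d) (nSphereNeg_invol d)) y = Quotient.mk _ y' ∧ θ = θ' := by
    simp only [q1, Prod.map_apply, Prod.mk.injEq, id]
  rw [e1, e2, e4, e3]
  constructor
  · rintro ⟨rfl, h1, h2⟩
    rcases h1 with h1 | h1
    · right; right
      refine ⟨h1, h1, h2.resolve_left ?_⟩
      rw [h1]; exact one_ne_zero
    · rcases h2 with h2 | h2
      · right; left; exact ⟨h2, h2, h1⟩
      · left; exact ⟨h1, h2, rfl⟩
  · rintro (⟨h1, h2, h3⟩ | ⟨h1, h2, h3⟩ | ⟨h1, h2, h3⟩)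
    · exact ⟨h3, Or.inr h1, Or.inr h2⟩
    · exact ⟨h1.trans h2.symm, Or.inr h3, Or.inl h1⟩
    · exact ⟨h1.trans h2.symm, Or.inl h1, Or.inr h3⟩

theorem RR_final (j n d : ℕ) (h : d + 1 = j * n) : Nonempty (ContinuousMap.HomotopyEquiv ((RR j).pow n).Q
    (TopJoin (nSphere d) (RPspace d))) := by
  obtain ⟨a⟩ := (RR_EE j n d h).quot
  obtain ⟨b⟩ := EE_SG d
  obtain ⟨c⟩ := SG_join d
  exact ⟨(a.trans b).trans c.toHomotopyEquiv⟩

section P10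

lemma homotopic_of_quot {X Z : Type} [TopologicalSpace X] [TopologicalSpace Z] (s : Setoid X)
    (F G : C(Quotient s, Z)) (K : unitInterval × X → Z) (cK : Continuous K)
    (hK : ∀ l x y, s.r x y → K (l, x) = K (l, y)) (h0 : ∀ x, K (0, x) = F (Quotient.mk s x))
    (h1 : ∀ x, K (1, x) = G (Quotient.mk s x)) : F.Homotopic G := by
  let c : C(X, C(unitInterval, Z)) := ContinuousMap.curry
      ⟨fun p : X × unitInterval => K (p.2, p.1), by fun_prop⟩
  let d : Quotient s → C(unitInterval, Z) := Quotient.lift c (fun x y h => by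
    ext t; exact hK t x y h)
  have hd : Continuous d := Continuous.quotient_lift c.continuous _
  refine ⟨⟨⟨fun p => d p.2 p.1, ?_⟩, ?_, ?_⟩⟩
  · fun_prop
  · intro x
    induction x using Quotient.inductionOn with
    | _ x => exact h0 x
  · intro x
    induction x using Quotient.inductionOn with
    | _ x => exact h1 x

abbrev VW (m j : ℕ) : Type := Fin (m + 1) → (Fin j → ℝ) × (Fin j → ℝ)
abbrev VV (m j : ℕ) : Type := (Fin (m + 1) → ℝ) × VW m j

variable {m j : ℕ}

def nv (v : VW m j) : ℝ := ∑ i, (‖(v i).1‖ + ‖(v i).2‖)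

def swW (v : VW m j) : VW m j := fun i => ((v i).2, (v i).1)

def swV (y : VV m j) : VV m j := (y.1, swW y.2)

lemma nv_sw (v : VW m j) : nv (swW v) = nv v := Finset.sum_congr rfl fun _ _ => add_comm _ _

lemma nv_nonneg (v : VW m j) : 0 ≤ nv v :=
  Finset.sum_nonneg fun _ _ => add_nonneg (norm_nonneg _) (norm_nonneg _)

lemma nv_eq_zero {v : VW m j} (h : nv v = 0) : v = 0 := by
  have := (Finset.sum_eq_zero_iff_of_nonneg
    (fun i _ => add_nonneg (norm_nonneg (v i).1) (norm_nonneg (v i).2))).1 h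
  funext i
  have h := this i (Finset.mem_univ i)
  have a := norm_nonneg (v i).1
  have b := norm_nonneg (v i).2
  exact Prod.ext (norm_eq_zero.1 (by linarith)) (norm_eq_zero.1 (by linarith))

def mu (y : VV m j) : ℝ := ∏ i, max (y.1 i) 0

def hh (y : VV m j) : ℝ := nv y.2 + ∑ i, |y.1 i - y.1 0| + ∑ i, max (-y.1 i) 0

def HV (l : ℝ) (y : VV m j) : VV m j :=
  (fun i => ((1 - l) + l * mu y) * y.1 i - l * hh y, ((1 - l) + l * mu y) • y.2)

lemma mu_nonneg (y : VV m j) : 0 ≤ mu y := Finset.prod_nonneg fun _ _ => le_max_right _ _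

lemma hh_p1 (y : VV m j) : 0 ≤ ∑ i, |y.1 i - y.1 0| := Finset.sum_nonneg fun _ _ => abs_nonneg _
lemma hh_p2 (y : VV m j) : 0 ≤ ∑ i, max (-y.1 i) 0 := Finset.sum_nonneg fun _ _ => le_max_right _ _

lemma hh_nonneg (y : VV m j) : 0 ≤ hh y :=
  add_nonneg (add_nonneg (nv_nonneg _) (hh_p1 _)) (hh_p2 _)

lemma mu_zero {y : VV m j} {i : Fin (m + 1)} (h : y.1 i ≤ 0) : mu y = 0 :=
  Finset.prod_eq_zero (Finset.mem_univ i) (max_eq_right h)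

lemma hh_zero {y : VV m j} (h : hh y = 0) : y.2 = 0 ∧ (∀ i, y.1 i = y.1 0) ∧ 0 ≤ y.1 0 := by
  have a := nv_nonneg y.2
  have b := hh_p1 y
  have c := hh_p2 y
  unfold hh at h
  refine ⟨nv_eq_zero (by linarith), fun i => ?_, ?_⟩
  · have := (Finset.sum_eq_zero_iff_of_nonneg (fun i _ => abs_nonneg (y.1 i - y.1 0))).1
      (show ∑ i, |y.1 i - y.1 0| = 0 by linarith) i (Finset.mem_univ i)
    linarith [abs_eq_zero.1 this]
  · have := (Finset.sum_eq_zero_iff_of_nonneg (fun i _ => le_max_right (-y.1 i) 0)).1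
      (show ∑ i, max (-y.1 i) 0 = 0 by linarith) 0 (Finset.mem_univ 0)
    linarith [le_max_left (-y.1 0) 0]

lemma VV_zero {y : VV m j} (h2 : y.2 = 0) (h1 : ∀ i, y.1 i = 0) : y = 0 :=
  Prod.ext (funext h1) h2

lemma HV_ne {l : ℝ} (h0 : 0 ≤ l) (h1 : l ≤ 1) {y : VV m j} (h : HV l y = 0) : y = 0 := by
  have e1 : ∀ i, ((1 - l) + l * mu y) * y.1 i - l * hh y = 0 := fun i => congrFun (congrArg Prod.fst h) i
  have e2 : ((1 - l) + l * mu y) • y.2 = 0 := congrArg Prod.snd h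
  have hm := mu_nonneg y
  have hlm : 0 ≤ l * mu y := mul_nonneg h0 hm
  have hH := hh_nonneg y
  rcases (show 0 ≤ (1 - l) + l * mu y by linarith).eq_or_lt with c | c
  · have hl : l = 1 := by linarith
    subst hl
    have hm0 : mu y = 0 := by linarith
    have hh0 : hh y = 0 := by have := e1 0; rw [hm0] at this; linarith
    obtain ⟨a1, a2, a3⟩ := hh_zero hh0
    refine VV_zero a1 fun i => ?_
    rw [a2]
    obtain ⟨k, -, hk⟩ := Finset.prod_eq_zero_iff.1 hm0
    rw [a2, max_eq_left a3] at hk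
    exact hk
  · have a1 := (smul_eq_zero.1 e2).resolve_left c.ne'
    have a2 : ∀ i, y.1 i = y.1 0 := fun i => by
      have := (e1 i).trans (e1 0).symm
      exact mul_left_cancel₀ c.ne' (by linarith)
    have a3 : 0 ≤ y.1 0 := by
      by_contra! hc
      have := mul_neg_of_pos_of_neg c hc
      have := e1 0
      have := mul_nonneg h0 hH
      linarith
    have hh0 : hh y = 0 := by
      unfold hh
      rw [a1, Finset.sum_eq_zero (fun i _ => by rw [a2 i]; simp),
        Finset.sum_eq_zero (fun i _ => by rw [a2 i]; exact max_eq_right (by linarith))]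
      simp [nv]
    refine VV_zero a1 fun i => ?_
    have := e1 i
    rw [hh0, mul_zero, sub_zero] at this
    exact (mul_eq_zero.1 this).resolve_left c.ne'

lemma HV_zero (y : VV m j) : HV 0 y = y := by
  unfold HV; simp

lemma mu_sw (y : VV m j) : mu (swV y) = mu y := rfl
lemma hh_sw (y : VV m j) : hh (swV y) = hh y := by
  show nv (swW y.2) + _ + _ = _
  rw [nv_sw]; rfl

lemma HV_sw (l : ℝ) (y : VV m j) : HV l (swV y) = swV (HV l y) := by
  refine Prod.ext ?_ ?_
  · funext i
    show ((1 - l) + l * mu (swV y)) * y.1 i - l * hh (swV y) = _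
    rw [hh_sw, mu_sw]; rfl
  · rfl

lemma HV_nonpos {l : ℝ} (h0 : 0 ≤ l) (h1 : l ≤ 1) {y : VV m j} {i : Fin (m + 1)} (h : y.1 i ≤ 0) :
    (HV l y).1 i ≤ 0 := by
  show ((1 - l) + l * mu y) * y.1 i - l * hh y ≤ 0
  rw [mu_zero h, mul_zero, add_zero]
  have := mul_nonpos_of_nonneg_of_nonpos (show 0 ≤ 1 - l by linarith) h
  have := mul_nonneg h0 (hh_nonneg y)
  linarith

def vb (m j : ℕ) : VV m j := (fun _ => -1, 0)

lemma HV_one {y : VV m j} {i : Fin (m + 1)} (h : y.1 i ≤ 0) : HV 1 y = hh y • vb m j := by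
  refine Prod.ext ?_ ?_
  · funext k
    show ((1 - 1) + 1 * mu y) * y.1 k - 1 * hh y = hh y * (-1)
    rw [mu_zero h]; ring
  · show ((1 - 1) + 1 * mu y) • y.2 = hh y • 0
    rw [mu_zero h]; simp

lemma HV_base (l : ℝ) : ∃ c : ℝ, HV l (vb m j) = c • vb m j ∧ (0 ≤ l → l ≤ 1 → 0 < c) := by
  have hm : mu (vb m j) = 0 := mu_zero (i := 0) (by show (-1 : ℝ) ≤ 0; norm_num)
  have hh1 : 0 ≤ hh (vb m j) := hh_nonneg _
  have hb0 : vb m j ≠ 0 := fun h => by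
    have : (-1 : ℝ) = 0 := congrFun (congrArg Prod.fst h) 0
    norm_num at this
  have e : HV l (vb m j) = ((1 - l) + l * hh (vb m j)) • vb m j := by
    refine Prod.ext ?_ ?_
    · funext k
      show ((1 - l) + l * mu (vb m j)) * (-1) - l * hh (vb m j) = ((1 - l) + l * hh (vb m j)) * (-1)
      rw [hm]; ring
    · show ((1 - l) + l * mu (vb m j)) • (0 : VW m j) = ((1 - l) + l * hh (vb m j)) • (0 : VW m j)
      simp
  refine ⟨_, e, fun h0 h1 => ?_⟩
  have := mul_nonneg h0 hh1
  refine lt_of_le_of_ne (by linarith) fun hc => ?_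
  rw [← hc, zero_smul] at e
  exact hb0 (HV_ne h0 h1 e)

lemma HV_continuous : Continuous fun p : ℝ × VV m j => HV p.1 p.2 := by
  unfold HV mu hh nv
  fun_prop

lemma swV_continuous : Continuous (swV : VV m j → VV m j) := by
  unfold swV swW
  fun_prop

lemma swV_zero {y : VV m j} (h : swV y = 0) : y = 0 := by
  have : swV (swV y) = swV 0 := congrArg swV h
  exact this

def legs (b : Bool) (s : ℝ) : TTs :=
  ⟨(max (-s) 0, if b then max s 0 else 0, if b then 0 else max s 0), le_max_right _ _, by
    dsimp only; split_ifs
    · exact le_max_right _ _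
    · exact le_rfl, by
    dsimp only; split_ifs
    · exact le_rfl
    · exact le_max_right _ _, by
    dsimp only; split_ifs
    · rcases le_total s 0 with h | h
      · right; exact max_eq_right h
      · left; exact max_eq_right (by linarith)
    · right; rfl, by
    dsimp only; split_ifs
    · right; rfl
    · rcases le_total s 0 with h | h
      · right; exact max_eq_right h
      · left; exact max_eq_right (by linarith), by
    dsimp only; split_ifs
    · right; rfl
    · left; rfl⟩

lemma legs_continuous (b : Bool) : Continuous (legs b) := by
  unfold legs
  apply Continuous.subtype_mk
  cases b
  · simp only [Bool.false_eq_true, if_false]; fun_prop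
  · simp only [if_true]; fun_prop

abbrev PX (m j : ℕ) : Type := Fin (m + 1) → TTs × ((Fin j → ℝ) × (Fin j → ℝ))

def iota (δ : Fin (m + 1) → Bool) (y : VV m j) : PX m j := fun i => (legs (δ i) (y.1 i), y.2 i)

def yy (q : PX m j) : VV m j :=
  (fun i => (q i).1.1.2.1 + (q i).1.1.2.2 - (q i).1.1.1, fun i => (q i).2)

def FF (δ : Fin (m + 1) → Bool) (q : PX m j) : Prop :=
  ∀ i, (if δ i then (q i).1.1.2.2 else (q i).1.1.2.1) = 0

def pτ (q : PX m j) : PX m j := fun i => ((q i).1.swap, (q i).2.2, (q i).2.1)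

lemma iota_continuous (δ : Fin (m + 1) → Bool) : Continuous (iota δ : VV m j → PX m j) := by
  unfold iota
  refine continuous_pi fun i => ?_
  have := legs_continuous (δ i)
  fun_prop

lemma yy_continuous : Continuous (yy : PX m j → VV m j) := by
  unfold yy
  fun_prop

lemma FF_closed (δ : Fin (m + 1) → Bool) : IsClosed {q : PX m j | FF δ q} := by
  simp only [FF, Set.ofPred_forall]
  refine isClosed_iInter fun i => isClosed_eq ?_ continuous_const
  split_ifs <;> fun_prop

lemma yy_iota (δ : Fin (m + 1) → Bool) (y : VV m j) : yy (iota δ y) = y := by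
  refine Prod.ext ?_ rfl
  funext i
  show (if δ i then max (y.1 i) 0 else 0) + (if δ i then 0 else max (y.1 i) 0) - max (-y.1 i) 0 = y.1 i
  rcases le_total (y.1 i) 0 with h | h
  · rw [max_eq_right h, max_eq_left (by linarith)]; split_ifs <;> ring
  · rw [max_eq_left h, max_eq_right (by linarith)]; split_ifs <;> ring

lemma FF_iota (δ : Fin (m + 1) → Bool) (y : VV m j) : FF δ (iota δ y) := by
  intro i
  show (if δ i then (if δ i then 0 else max (y.1 i) 0) else (if δ i then max (y.1 i) 0 else 0)) = 0
  split_ifs <;> rfl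

lemma iota_yy {δ : Fin (m + 1) → Bool} {q : PX m j} (h : FF δ q) : iota δ (yy q) = q := by
  funext i
  have hi := h i
  rcases hq : q i with ⟨⟨⟨a, b, c⟩, h1, h2, h3, h4, h5, h6⟩, v⟩
  rw [hq] at hi
  dsimp only at hi h1 h2 h3 h4 h5 h6
  refine Prod.ext (TTs.ext' ?_ ?_ ?_) ?_
  · show max (-((q i).1.1.2.1 + (q i).1.1.2.2 - (q i).1.1.1)) 0 = a
    rw [hq]; dsimp only
    rcases h4 with h4 | h4 <;> rcases h5 with h5 | h5 <;>
      first
      | (rw [h4, max_eq_right]; linarith; done)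
      | (rw [h4, max_eq_right] <;> linarith)
      | (rw [h5, max_eq_right] <;> linarith)
      | (rw [h4, h5, max_eq_left] <;> linarith)
  · show (if δ i then max ((q i).1.1.2.1 + (q i).1.1.2.2 - (q i).1.1.1) 0 else 0) = b
    rw [hq]; dsimp only
    split_ifs at hi ⊢
    · rcases h4 with h4 | h4
      · rw [hi, h4, max_eq_left] <;> linarith
      · rw [hi, h4, max_eq_right]; linarith
    · exact hi.symm
  · show (if δ i then 0 else max ((q i).1.1.2.1 + (q i).1.1.2.2 - (q i).1.1.1) 0) = c
    rw [hq]; dsimp only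
    split_ifs at hi ⊢
    · exact hi.symm
    · rcases h5 with h5 | h5
      · rw [hi, h5, max_eq_left] <;> linarith
      · rw [hi, h5, max_eq_right]; linarith
  · show (q i).2 = v
    rw [hq]

lemma iota_sw (δ : Fin (m + 1) → Bool) (y : VV m j) : iota (fun i => !(δ i)) (swV y) = pτ (iota δ y) := by
  funext i
  refine Prod.ext (TTs.ext' rfl ?_ ?_) rfl
  · show (if (!(δ i)) = true then max (y.1 i) 0 else 0) = (if δ i then 0 else max (y.1 i) 0)
    cases δ i <;> simp
  · show (if (!(δ i)) = true then 0 else max (y.1 i) 0) = (if δ i then max (y.1 i) 0 else 0)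
    cases δ i <;> simp

lemma yy_pτ (q : PX m j) : yy (pτ q) = swV (yy q) := by
  refine Prod.ext ?_ rfl
  funext i
  show (q i).1.1.2.2 + (q i).1.1.2.1 - (q i).1.1.1 = (q i).1.1.2.1 + (q i).1.1.2.2 - (q i).1.1.1
  ring

lemma FF_pτ {δ : Fin (m + 1) → Bool} {q : PX m j} (h : FF δ q) : FF (fun i => !(δ i)) (pτ q) := by
  intro i
  have hi := h i
  show (if (!(δ i)) = true then (q i).1.1.2.1 else (q i).1.1.2.2) = 0
  cases hd : δ i <;> rw [hd] at hi <;> simpa using hi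

def eps (q : PX m j) (i : Fin (m + 1)) : Bool := decide ((q i).1.1.2.2 = 0)

lemma FF_eps (q : PX m j) : FF (eps q) q := by
  intro i
  unfold eps
  by_cases h : (q i).1.1.2.2 = 0
  · simp [h]
  · simp only [h, decide_false, Bool.false_eq_true, if_false]
    exact (q i).1.2.2.2.2.2.2.resolve_right h

lemma FF_two {δ δ' : Fin (m + 1) → Bool} {q : PX m j} (h : FF δ q) (h' : FF δ' q) (i : Fin (m + 1))
    (hi : δ i ≠ δ' i) : (yy q).1 i ≤ 0 := by
  have a := h i
  have b := h' i
  have c := (q i).1.2.1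
  show (q i).1.1.2.1 + (q i).1.1.2.2 - (q i).1.1.1 ≤ 0
  cases hd : δ i <;> cases hd' : δ' i <;> rw [hd] at a <;> rw [hd'] at b <;> simp_all

lemma iota_congr {δ δ' : Fin (m + 1) → Bool} {y : VV m j} (h : ∀ i, δ i ≠ δ' i → y.1 i ≤ 0) :
    iota δ y = iota δ' y := by
  funext i
  by_cases c : δ i = δ' i
  · unfold iota; rw [c]
  · have := h i c
    refine Prod.ext (TTs.ext' rfl ?_ ?_) rfl
    · show (if δ i then max (y.1 i) 0 else 0) = (if δ' i then max (y.1 i) 0 else 0)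
      rw [max_eq_right this]; simp
    · show (if δ i then 0 else max (y.1 i) 0) = (if δ' i then 0 else max (y.1 i) 0)
      rw [max_eq_right this]; simp

lemma yy_z : yy (((TR j).pow (m + 1)).z) = (0 : VV m j) := by
  refine Prod.ext ?_ rfl
  funext i
  show (0 : ℝ) + 0 - 0 = 0
  ring

lemma iota_ne {δ : Fin (m + 1) → Bool} {y : VV m j} (h : y ≠ 0) : iota δ y ≠ ((TR j).pow (m + 1)).z := by
  intro e
  apply h
  rw [← yy_iota δ y, e, yy_z]

lemma iota_zero (δ : Fin (m + 1) → Bool) : iota δ 0 = ((TR j).pow (m + 1)).z := by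
  funext i
  refine Prod.ext (TTs.ext' ?_ ?_ ?_) rfl
  · show max (-(0 : ℝ)) 0 = 0; simp
  · show (if δ i then max (0 : ℝ) 0 else 0) = 0; simp
  · show (if δ i then 0 else max (0 : ℝ) 0) = 0; simp

lemma yy_ne {q : PX m j} (h : q ≠ ((TR j).pow (m + 1)).z) : yy q ≠ 0 := by
  intro e
  apply h
  rw [← iota_yy (FF_eps q), e, iota_zero]

end P10

section P11

lemma glueCov {X Z D : Type} [TopologicalSpace X] [TopologicalSpace Z] [Finite D] (S : D → Set X)
    (hS : ∀ d, IsClosed (S d)) (Φ : D → X → Z) (hΦ : ∀ d, Continuous (Φ d))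
    (hov : ∀ d d' x, x ∈ S d → x ∈ S d' → Φ d x = Φ d' x) (e : X → D) (he : ∀ x, x ∈ S (e x)) :
    Continuous fun x => Φ (e x) x := by
  refine (locallyFinite_of_finite S).continuous ?_ hS fun d => ?_
  · exact Set.eq_univ_of_forall fun x => Set.mem_iUnion.2 ⟨e x, he x⟩
  · exact (hΦ d).continuousOn.congr fun x hx => hov _ _ x (he x) hx

variable {m j d : ℕ}

abbrev nzV (m j : ℕ) : Type := {y : VV m j // y ≠ 0}

def NS (L : VV m j ≃L[ℝ] ES d) (y : nzV m j) : nSphere d :=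
  ⟨‖L y.1‖⁻¹ • L y.1, by
    have : L y.1 ≠ 0 := fun h => y.2 (L.map_eq_zero_iff.1 h)
    rw [Metric.mem_sphere, dist_zero_right, norm_smul, norm_inv, norm_norm,
      inv_mul_cancel₀ (norm_ne_zero_iff.2 this)]⟩

lemma Lnorm_ne (L : VV m j ≃L[ℝ] ES d) (y : nzV m j) : ‖L y.1‖ ≠ 0 :=
  norm_ne_zero_iff.2 fun h => y.2 (L.map_eq_zero_iff.1 h)

lemma NS_continuous (L : VV m j ≃L[ℝ] ES d) : Continuous (NS L) := by
  unfold NS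
  apply Continuous.subtype_mk
  have h1 : Continuous fun y : nzV m j => L y.1 := L.continuous.comp continuous_subtype_val
  exact (h1.norm.inv₀ (Lnorm_ne L)).smul h1

lemma NS_base (L : VV m j ≃L[ℝ] ES d) (hL : L (vb m j) = (northPole d).1) (y : nzV m j) (c : ℝ)
    (hc : 0 ≤ c) (h : y.1 = c • vb m j) : NS L y = northPole d := by
  have hc' : c ≠ 0 := fun e => y.2 (by rw [h, e, zero_smul])
  apply Subtype.ext
  show ‖L y.1‖⁻¹ • L y.1 = _
  rw [h, map_smul, hL, norm_smul, nSphere_norm, Real.norm_of_nonneg hc, mul_one, smul_smul,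
    inv_mul_cancel₀ hc', one_smul]

def HVn (l : unitInterval) (y : nzV m j) : nzV m j :=
  ⟨HV l.1 y.1, fun h => y.2 (HV_ne l.2.1 l.2.2 h)⟩

lemma HVn_continuous : Continuous fun p : unitInterval × nzV m j => HVn p.1 p.2 := by
  unfold HVn
  apply Continuous.subtype_mk
  exact HV_continuous.comp (by fun_prop : Continuous fun p : unitInterval × nzV m j => ((p.1 : ℝ), p.2.1))

def tw (δ : Fin (m + 1) → Bool) (y : VV m j) : VV m j := if δ 0 then y else swV y

lemma tw_not (δ : Fin (m + 1) → Bool) (y : VV m j) : tw (fun i => !(δ i)) (swV y) = tw δ y := by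
  show (if (!(δ 0)) = true then swV y else swV (swV y)) = if δ 0 then y else swV y
  cases δ 0
  · rfl
  · rfl

lemma tw_fst (δ : Fin (m + 1) → Bool) (y : VV m j) : (tw δ y).1 = y.1 := by
  unfold tw
  cases δ 0 <;> rfl

lemma hh_tw (δ : Fin (m + 1) → Bool) (y : VV m j) : hh (tw δ y) = hh y := by
  unfold tw
  split_ifs
  · rfl
  · exact hh_sw y

def twn (δ : Fin (m + 1) → Bool) (y : nzV m j) : nzV m j :=
  ⟨tw δ y.1, fun h => y.2 (by
    unfold tw at h
    split_ifs at h
    · exact h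
    · exact swV_zero h)⟩

lemma twn_continuous (δ : Fin (m + 1) → Bool) : Continuous (twn δ : nzV m j → nzV m j) := by
  unfold twn tw
  apply Continuous.subtype_mk
  split_ifs
  · exact continuous_subtype_val
  · exact swV_continuous.comp continuous_subtype_val

abbrev nzP (m j : ℕ) : Type := ((TR j).pow (m + 1)).nz

def yyn (q : nzP m j) : nzV m j := ⟨yy q.1, yy_ne q.2⟩

lemma yyn_tau {q q' : nzP m j} (h : q'.1 = pτ q.1) : (yyn q').1 = swV (yyn q).1 :=
  (congrArg yy h).trans (yy_pτ (m := m) (j := j) q.1)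

lemma FFn_tau {δ : Fin (m + 1) → Bool} {q q' : nzP m j} (h : q'.1 = pτ q.1) (hF : FF δ q.1) :
    FF (fun i => !(δ i)) q'.1 := by
  have := FF_pτ (m := m) (j := j) hF
  rw [← h] at this
  exact this

lemma yyn_continuous : Continuous (yyn : nzP m j → nzV m j) := by
  unfold yyn
  apply Continuous.subtype_mk
  exact yy_continuous.comp continuous_subtype_val

def iotan (δ : Fin (m + 1) → Bool) (y : nzV m j) : nzP m j := ⟨iota δ y.1, iota_ne y.2⟩

lemma iotan_continuous (δ : Fin (m + 1) → Bool) : Continuous (iotan δ : nzV m j → nzP m j) := by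
  unfold iotan
  apply Continuous.subtype_mk
  exact (iota_continuous δ).comp continuous_subtype_val

def idx (e : (Fin m → Bool) ≃ Fin (2 ^ m)) (δ : Fin (m + 1) → Bool) : Fin (2 ^ m) :=
  e fun i => δ i.succ == δ 0

def pat (e : (Fin m → Bool) ≃ Fin (2 ^ m)) (k : Fin (2 ^ m)) : Fin (m + 1) → Bool :=
  Fin.cons true (e.symm k)

lemma idx_pat (e : (Fin m → Bool) ≃ Fin (2 ^ m)) (k : Fin (2 ^ m)) : idx e (pat e k) = k := by
  unfold idx pat
  simp

lemma idx_not (e : (Fin m → Bool) ≃ Fin (2 ^ m)) (δ : Fin (m + 1) → Bool) :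
    idx e (fun i => !(δ i)) = idx e δ := by
  unfold idx
  congr 1
  funext i
  show ((!(δ i.succ)) == (!(δ 0))) = (δ i.succ == δ 0)
  cases δ i.succ <;> cases δ 0 <;> rfl

lemma pat_idx_true (e : (Fin m → Bool) ≃ Fin (2 ^ m)) (δ : Fin (m + 1) → Bool) (h : δ 0 = true) :
    pat e (idx e δ) = δ := by
  unfold idx pat
  funext i
  refine Fin.cases ?_ (fun i => ?_) i
  · simp [h]
  · simp [h]

lemma pat_idx_false (e : (Fin m → Bool) ≃ Fin (2 ^ m)) (δ : Fin (m + 1) → Bool) (h : δ 0 = false) :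
    pat e (idx e δ) = fun i => !(δ i) := by
  unfold idx pat
  funext i
  refine Fin.cases ?_ (fun i => ?_) i
  · simp [h]
  · simp [h]

abbrev wmk (m d : ℕ) (p : Fin (2 ^ m) × nSphere d) : WedgeOfSpheres (2 ^ m) d :=
  Quotient.mk (wedgeSetoid (2 ^ m) d) p

abbrev pmk (q : nzP m j) : ((TR j).pow (m + 1)).Q :=
  Quotient.mk (involutionSetoid ((TR j).pow (m + 1)).nτ ((TR j).pow (m + 1)).nτ_invol) q

lemma wmk_continuous : Continuous (wmk m d) := continuous_quotient_mk'
lemma pmk_continuous : Continuous (pmk : nzP m j → _) := continuous_quotient_mk'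

lemma pmk_tau (a b : nzP m j) (h : b.1 = pτ a.1) : pmk a = pmk b :=
  Quotient.sound (Or.inr (Subtype.ext h))

def ff (L : VV m j ≃L[ℝ] ES d) (e : (Fin m → Bool) ≃ Fin (2 ^ m)) (δ : Fin (m + 1) → Bool)
    (q : nzP m j) : WedgeOfSpheres (2 ^ m) d :=
  wmk m d (idx e δ, NS L (HVn 1 (twn δ (yyn q))))

lemma ff_continuous (L : VV m j ≃L[ℝ] ES d) (e : (Fin m → Bool) ≃ Fin (2 ^ m)) (δ : Fin (m + 1) → Bool) :
    Continuous (ff L e δ) := by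
  unfold ff
  apply wmk_continuous.comp
  refine continuous_const.prodMk ((NS_continuous L).comp (HVn_continuous.comp (continuous_const.prodMk ?_)))
  exact (twn_continuous δ).comp yyn_continuous

lemma exists_nonpos {δ δ' : Fin (m + 1) → Bool} {q : PX m j} (h : FF δ q) (h' : FF δ' q) (hn : δ ≠ δ') :
    ∃ i, (yy q).1 i ≤ 0 := by
  obtain ⟨i, hi⟩ := Function.ne_iff.1 hn
  exact ⟨i, FF_two h h' i hi⟩

lemma HV_one_tw (δ : Fin (m + 1) → Bool) {y : VV m j} {i : Fin (m + 1)} (h : y.1 i ≤ 0) :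
    HV 1 (tw δ y) = hh y • vb m j := by
  rw [← hh_tw δ y]
  exact HV_one (i := i) (by rw [tw_fst]; exact h)

lemma ff_overlap (L : VV m j ≃L[ℝ] ES d) (hL : L (vb m j) = (northPole d).1)
    (e : (Fin m → Bool) ≃ Fin (2 ^ m)) (δ δ' : Fin (m + 1) → Bool)
    (q : nzP m j) (h : FF δ q.1) (h' : FF δ' q.1) : ff L e δ q = ff L e δ' q := by
  by_cases hn : δ = δ'
  · rw [hn]
  · obtain ⟨i, hi⟩ := exists_nonpos h h' hn
    refine Quotient.sound (Or.inr ⟨?_, ?_⟩)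
    · exact NS_base L hL _ _ (hh_nonneg (yy q.1)) (HV_one_tw δ hi)
    · exact NS_base L hL _ _ (hh_nonneg (yy q.1)) (HV_one_tw δ' hi)

lemma FFn_closed (δ : Fin (m + 1) → Bool) : IsClosed {q : nzP m j | FF δ q.1} :=
  (FF_closed δ).preimage continuous_subtype_val

lemma ff_not (L : VV m j ≃L[ℝ] ES d) (e : (Fin m → Bool) ≃ Fin (2 ^ m)) (δ : Fin (m + 1) → Bool)
    (q q' : nzP m j) (h : q'.1 = pτ q.1) : ff L e (fun i => !(δ i)) q' = ff L e δ q := by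
  unfold ff
  rw [idx_not]
  have : twn (fun i => !(δ i)) (yyn q') = twn δ (yyn q) := by
    apply Subtype.ext
    show tw (fun i => !(δ i)) (yyn q').1 = tw δ (yyn q).1
    rw [yyn_tau h, tw_not]
  rw [this]

def fmap (L : VV m j ≃L[ℝ] ES d) (hL : L (vb m j) = (northPole d).1) (e : (Fin m → Bool) ≃ Fin (2 ^ m)) :
    C(((TR j).pow (m + 1)).Q, WedgeOfSpheres (2 ^ m) d) where
  toFun := Quotient.lift (fun q : nzP m j => ff L e (eps q.1) q) (by
    rintro a b (rfl | h)
    · rfl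
    · have hb : b.1 = pτ a.1 := congrArg Subtype.val h
      exact (ff_not L e (eps a.1) a b hb).symm.trans
        (ff_overlap L hL e _ _ b (FFn_tau hb (FF_eps _)) (FF_eps _)))
  continuous_toFun := by
    apply Continuous.quotient_lift
    exact glueCov (fun δ => {q : nzP m j | FF δ q.1}) FFn_closed (fun δ => ff L e δ) (ff_continuous L e)
      (fun δ δ' q h h' => ff_overlap L hL e δ δ' q h h') (fun q => eps q.1) fun q => FF_eps q.1

def Lin (L : VV m j ≃L[ℝ] ES d) (x : nSphere d) : nzV m j :=
  ⟨L.symm x.1, fun h => by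
    have h1 := nSphere_norm x
    rw [L.symm.map_eq_zero_iff.1 h, norm_zero] at h1
    exact zero_ne_one h1⟩

lemma Lin_continuous (L : VV m j ≃L[ℝ] ES d) : Continuous (Lin L) := by
  unfold Lin
  apply Continuous.subtype_mk
  exact L.symm.continuous.comp continuous_subtype_val

lemma Lin_base (L : VV m j ≃L[ℝ] ES d) (hL : L (vb m j) = (northPole d).1) :
    (Lin L (northPole d)).1 = vb m j := by
  show L.symm (northPole d).1 = _
  rw [← hL, L.symm_apply_apply]

lemma vb_fst (i : Fin (m + 1)) : (vb m j).1 i ≤ 0 := by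
  show (-1 : ℝ) ≤ 0
  norm_num

def gmap (L : VV m j ≃L[ℝ] ES d) (hL : L (vb m j) = (northPole d).1) (e : (Fin m → Bool) ≃ Fin (2 ^ m)) :
    C(WedgeOfSpheres (2 ^ m) d, ((TR j).pow (m + 1)).Q) where
  toFun := Quotient.lift (fun p : Fin (2 ^ m) × nSphere d => pmk (iotan (pat e p.1) (Lin L p.2))) (by
    rintro ⟨k, x⟩ ⟨k', x'⟩ (h | ⟨h1, h2⟩)
    · rw [h]
    · dsimp only at h1 h2 ⊢
      rw [h1, h2]
      congr 1
      apply Subtype.ext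
      show iota _ _ = iota _ _
      rw [Lin_base L hL]
      exact iota_congr fun i _ => vb_fst i)
  continuous_toFun := by
    apply Continuous.quotient_lift
    apply pmk_continuous.comp
    rw [continuous_prod_of_discrete_left]
    exact fun k => (iotan_continuous (pat e k)).comp (Lin_continuous L)

lemma NS_Lin (L : VV m j ≃L[ℝ] ES d) (x : nSphere d) : NS L (Lin L x) = x := by
  apply Subtype.ext
  show ‖L (L.symm x.1)‖⁻¹ • L (L.symm x.1) = x.1
  rw [L.apply_symm_apply, nSphere_norm, inv_one, one_smul]

lemma HVn_zero (y : nzV m j) : HVn 0 y = y := Subtype.ext (HV_zero y.1)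

lemma fg_hom (L : VV m j ≃L[ℝ] ES d) (hL : L (vb m j) = (northPole d).1) (e : (Fin m → Bool) ≃ Fin (2 ^ m)) :
    (ContinuousMap.id _).Homotopic ((fmap L hL e).comp (gmap L hL e)) := by
  refine homotopic_of_quot (wedgeSetoid (2 ^ m) d) _ _
    (fun p => wmk m d (p.2.1, NS L (HVn p.1 (Lin L p.2.2)))) ?_ ?_ ?_ ?_
  · apply wmk_continuous.comp
    have h1 := Lin_continuous L
    have h2 : Continuous fun p : unitInterval × (Fin (2 ^ m) × nSphere d) => (p.1, Lin L p.2.2) := by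
      fun_prop
    exact Continuous.prodMk (by fun_prop) ((NS_continuous L).comp (HVn_continuous.comp h2))
  · rintro l ⟨k, x⟩ ⟨k', x'⟩ (h | ⟨h1, h2⟩)
    · rw [h]
    · dsimp only at h1 h2 ⊢
      have : NS L (HVn l (Lin L (northPole d))) = northPole d := by
        obtain ⟨c, hc, hc'⟩ := HV_base (m := m) (j := j) l.1
        refine NS_base L hL _ c (hc' l.2.1 l.2.2).le ?_
        show HV l.1 (Lin L (northPole d)).1 = _
        rw [Lin_base L hL, hc]
      rw [h1, h2, this]
      exact Quotient.sound (Or.inr ⟨rfl, rfl⟩)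
  · rintro ⟨k, x⟩
    dsimp only
    rw [HVn_zero, NS_Lin]
    rfl
  · rintro ⟨k, x⟩
    show _ = ff L e (eps (iotan (pat e k) (Lin L x)).1) (iotan (pat e k) (Lin L x))
    rw [ff_overlap L hL e _ (pat e k) _ (FF_eps _) (FF_iota _ _)]
    unfold ff
    rw [idx_pat]
    have : twn (pat e k) (yyn (iotan (pat e k) (Lin L x))) = Lin L x := by
      apply Subtype.ext
      show tw (pat e k) (yy (iota (pat e k) (Lin L x).1)) = _
      rw [yy_iota]
      rfl
    rw [this]

def sc (L : VV m j ≃L[ℝ] ES d) (δ : Fin (m + 1) → Bool) (l : unitInterval) (y : nzV m j) : ℝ :=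
  (1 - l.1) + l.1 * ‖L (HVn 1 (twn δ y)).1‖⁻¹

lemma sc_pos (L : VV m j ≃L[ℝ] ES d) (δ : Fin (m + 1) → Bool) (l : unitInterval) (y : nzV m j) :
    0 < sc L δ l y := by
  have h : 0 < ‖L (HVn 1 (twn δ y)).1‖⁻¹ :=
    inv_pos.2 (lt_of_le_of_ne (norm_nonneg _) (Lnorm_ne L _).symm)
  have h0 := l.2.1
  have h1 := l.2.2
  unfold sc
  rcases h0.eq_or_lt with c | c
  · rw [← c]; norm_num
  · have := mul_pos c h
    linarith

lemma sc_continuous (L : VV m j ≃L[ℝ] ES d) (δ : Fin (m + 1) → Bool) :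
    Continuous fun p : unitInterval × nzV m j => sc L δ p.1 p.2 := by
  unfold sc
  have h1 : Continuous fun p : unitInterval × nzV m j => (HVn 1 (twn δ p.2)) :=
    HVn_continuous.comp (continuous_const.prodMk ((twn_continuous δ).comp continuous_snd))
  have h2 : Continuous fun p : unitInterval × nzV m j => ‖L (HVn 1 (twn δ p.2)).1‖ :=
    (L.continuous.comp (continuous_subtype_val.comp h1)).norm
  have h3 := h2.inv₀ fun p => Lnorm_ne L _
  have h4 : Continuous fun p : unitInterval × nzV m j => (p.1 : ℝ) := by fun_prop
  exact (continuous_const.sub h4).add (h4.mul h3)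

def mvv (L : VV m j ≃L[ℝ] ES d) (δ : Fin (m + 1) → Bool) (l : unitInterval) (y : nzV m j) : nzV m j :=
  ⟨sc L δ l y • (HVn l y).1, smul_ne_zero (sc_pos L δ l y).ne' (HVn l y).2⟩

def KK (L : VV m j ≃L[ℝ] ES d) (δ : Fin (m + 1) → Bool) (p : unitInterval × nzP m j) : nzP m j :=
  iotan δ (mvv L δ p.1 (yyn p.2))

lemma KK_continuous (L : VV m j ≃L[ℝ] ES d) (δ : Fin (m + 1) → Bool) :
    Continuous (KK L δ : unitInterval × nzP m j → nzP m j) := by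
  unfold KK
  apply (iotan_continuous δ).comp
  unfold mvv
  apply Continuous.subtype_mk
  have h : Continuous fun p : unitInterval × nzP m j => (p.1, yyn p.2) :=
    continuous_fst.prodMk (yyn_continuous.comp continuous_snd)
  exact ((sc_continuous L δ).comp h).smul (continuous_subtype_val.comp (HVn_continuous.comp h))

lemma KK_overlap (L : VV m j ≃L[ℝ] ES d) (δ δ' : Fin (m + 1) → Bool) (l : unitInterval)
    (q : nzP m j) (h : FF δ q.1) (h' : FF δ' q.1) : KK L δ (l, q) = KK L δ' (l, q) := by
  by_cases hn : δ = δ'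
  · rw [hn]
  · obtain ⟨i, hi⟩ := exists_nonpos h h' hn
    have hs : sc L δ l (yyn q) = sc L δ' l (yyn q) := by
      have e1 : (HVn 1 (twn δ (yyn q))).1 = hh (yy q.1) • vb m j := HV_one_tw δ hi
      have e2 : (HVn 1 (twn δ' (yyn q))).1 = hh (yy q.1) • vb m j := HV_one_tw δ' hi
      unfold sc
      rw [e1, e2]
    apply Subtype.ext
    show iota δ (sc L δ l (yyn q) • HV l.1 (yy q.1)) = iota δ' (sc L δ' l (yyn q) • HV l.1 (yy q.1))
    rw [← hs]
    refine iota_congr fun i hi => ?_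
    exact mul_nonpos_of_nonneg_of_nonpos (sc_pos L δ l (yyn q)).le
      (HV_nonpos l.2.1 l.2.2 (FF_two h h' i hi))

lemma swV_smul (c : ℝ) (y : VV m j) : swV (c • y) = c • swV y := rfl

lemma KK_not (L : VV m j ≃L[ℝ] ES d) (δ : Fin (m + 1) → Bool) (l : unitInterval)
    (q q' : nzP m j) (h : q'.1 = pτ q.1) : (KK L (fun i => !(δ i)) (l, q')).1 = pτ (KK L δ (l, q)).1 := by
  show iota _ (sc L (fun i => !(δ i)) l (yyn q') • HV l.1 (yyn q').1) =
    pτ (iota δ (sc L δ l (yyn q) • HV l.1 (yyn q).1))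
  have e1 : twn (fun i => !(δ i)) (yyn q') = twn δ (yyn q) := by
    apply Subtype.ext
    show tw (fun i => !(δ i)) (yyn q').1 = tw δ (yyn q).1
    rw [yyn_tau h, tw_not]
  have e2 : sc L (fun i => !(δ i)) l (yyn q') = sc L δ l (yyn q) := by
    unfold sc; rw [e1]
  rw [e2, ← iota_sw, yyn_tau h, HV_sw, swV_smul]

lemma KK_zero (L : VV m j ≃L[ℝ] ES d) (δ : Fin (m + 1) → Bool) (q : nzP m j) (h : FF δ q.1) :
    KK L δ (0, q) = q := by
  apply Subtype.ext
  show iota δ (((1 - 0) + 0 * _) • HV 0 (yy q.1)) = q.1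
  rw [HV_zero, zero_mul, sub_zero, add_zero, one_smul, iota_yy h]

lemma KK_one (L : VV m j ≃L[ℝ] ES d) (hL : L (vb m j) = (northPole d).1) (e : (Fin m → Bool) ≃ Fin (2 ^ m))
    (δ : Fin (m + 1) → Bool) (q : nzP m j) : pmk (KK L δ (1, q)) = gmap L hL e (ff L e δ q) := by
  show _ = pmk (iotan (pat e (idx e δ)) (Lin L (NS L (HVn 1 (twn δ (yyn q))))))
  set c : ℝ := ‖L (HVn 1 (twn δ (yyn q))).1‖⁻¹ with hc
  have e1 : (KK L δ (1, q)).1 = iota δ (c • HV 1 (yy q.1)) := by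
    show iota δ (((1 - 1) + 1 * c) • HV 1 (yy q.1)) = _
    rw [sub_self, zero_add, one_mul]
  have e2 : (iotan (pat e (idx e δ)) (Lin L (NS L (HVn 1 (twn δ (yyn q)))))).1 =
      iota (pat e (idx e δ)) (c • HV 1 (tw δ (yy q.1))) := by
    show iota _ (L.symm (c • L (HV 1 (tw δ (yy q.1))))) = _
    rw [map_smul, L.symm_apply_apply]
  cases h : δ 0
  · apply pmk_tau
    rw [e1, e2, pat_idx_false e δ h, ← iota_sw, swV_smul, ← HV_sw]
    unfold tw
    rw [h]
    rfl
  · congr 1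
    apply Subtype.ext
    rw [e1, e2, pat_idx_true e δ h]
    unfold tw
    rw [h]
    rfl

lemma gf_hom (L : VV m j ≃L[ℝ] ES d) (hL : L (vb m j) = (northPole d).1) (e : (Fin m → Bool) ≃ Fin (2 ^ m)) :
    (ContinuousMap.id _).Homotopic ((gmap L hL e).comp (fmap L hL e)) := by
  refine homotopic_of_quot (involutionSetoid ((TR j).pow (m + 1)).nτ ((TR j).pow (m + 1)).nτ_invol) _ _
    (fun p : unitInterval × nzP m j => pmk (KK L (eps p.2.1) p)) ?_ ?_ ?_ ?_
  · apply pmk_continuous.comp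
    exact glueCov (fun δ => {p : unitInterval × nzP m j | FF δ p.2.1})
      (fun δ => (FFn_closed δ).preimage continuous_snd) (fun δ => KK L δ) (KK_continuous L)
      (fun δ δ' p h h' => KK_overlap L δ δ' p.1 p.2 h h') (fun p => eps p.2.1) fun p => FF_eps p.2.1
  · rintro l a b (rfl | h)
    · rfl
    · have hb : b.1 = pτ a.1 := congrArg Subtype.val h
      apply pmk_tau
      refine Eq.trans ?_ (KK_not L (eps a.1) l a b hb)
      exact congrArg Subtype.val (KK_overlap L _ _ l b (FF_eps _) (FFn_tau hb (FF_eps _)))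
  · intro q
    dsimp only
    rw [KK_zero L _ q (FF_eps _)]
    rfl
  · intro q
    exact KK_one L hL e _ q

theorem TR_final (j m d : ℕ) (h : d + 1 = (m + 1) * (2 * j + 1)) :
    Nonempty (ContinuousMap.HomotopyEquiv ((TR j).pow (m + 1)).Q (WedgeOfSpheres (2 ^ m) d)) := by
  have hfr : Module.finrank ℝ (VV m j) = Module.finrank ℝ (ES d) := by
    rw [finrank_euclideanSpace, Fintype.card_fin, h, Module.finrank_prod, Module.finrank_pi]
    simp [Module.finrank_pi_fintype]
    ring
  let L0 : VV m j ≃L[ℝ] ES d := ContinuousLinearEquiv.ofFinrankEq hfr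
  have hb0 : L0 (vb m j) ≠ 0 := fun h => by
    have h' := L0.map_eq_zero_iff.1 h
    have : (-1 : ℝ) = 0 := congrFun (congrArg Prod.fst h') 0
    norm_num at this
  have hn0 : (northPole d).1 ≠ 0 := fun h => by
    have := nSphere_norm (northPole d)
    rw [h, norm_zero] at this
    exact zero_ne_one this
  obtain ⟨A, hA⟩ := SeparatingDual.exists_continuousLinearEquiv_apply_eq (R := ℝ) hb0 hn0
  let L : VV m j ≃L[ℝ] ES d := L0.trans A
  have hL : L (vb m j) = (northPole d).1 := hA
  let e : (Fin m → Bool) ≃ Fin (2 ^ m) := Fintype.equivFinOfCardEq (by simp)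
  exact ⟨⟨fmap L hL e, gmap L hL e, (gf_hom L hL e).symm, (fg_hom L hL e).symm⟩⟩

end P11

/-- The homotopy type of `Hom₊(C_{2r+1},K_n)/ℤ₂` for the `ℤ/2`-action induced by the
reflection of the cycle: a wedge of `2^{n-1}` copies of `S^{nk-1}` if `2r+1 = 3k`, and the join
`S^{kn/2-1} * ℝP^{kn/2-1}` if `2r+1 = 3k ± 1`. -/
theorem homPlus_quotient_homotopy_type (r n k : ℕ) (hr : 1 ≤ r) (hn : 1 ≤ n) :
    (2 * r + 1 = 3 * k → Nonempty (ContinuousMap.HomotopyEquiv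
        (Z2Quotient (HomPlus (oddCycle r) (completeGraph n))
          (precompHomPlus (cycleReflect r) (cycleReflect_bijective r) (completeGraph n))
          (precompHomPlus_invol (cycleReflect r) (cycleReflect_bijective r)
            (cycleReflect_invol r) (completeGraph n)))
        (WedgeOfSpheres (2 ^ (n - 1)) (n * k - 1)))) ∧
    ((2 * r + 1 = 3 * k + 1 ∨ 2 * r + 1 = 3 * k - 1) →
      Nonempty (ContinuousMap.HomotopyEquiv
        (Z2Quotient (HomPlus (oddCycle r) (completeGraph n))
          (precompHomPlus (cycleReflect r) (cycleReflect_bijective r) (completeGraph n))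
          (precompHomPlus_invol (cycleReflect r) (cycleReflect_bijective r)
            (cycleReflect_invol r) (completeGraph n)))
        (TopJoin (nSphere (k * n / 2 - 1)) (RPspace (k * n / 2 - 1))))) := by
  constructor
  · intro h
    obtain ⟨j, rfl⟩ : ∃ j, k = 2 * j + 1 := ⟨k / 2, by omega⟩
    obtain rfl : r = 3 * j + 1 := by omega
    obtain ⟨m, rfl⟩ : ∃ m, n = m + 1 := ⟨n - 1, by omega⟩
    have hd : (m + 1) * (2 * j + 1) - 1 + 1 = (m + 1) * (2 * j + 1) :=
      Nat.sub_add_cancel (Nat.mul_pos (by omega) (by omega))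
    obtain ⟨e1⟩ := homPlus_to_pow (3 * j + 1) (m + 1)
    obtain ⟨e2⟩ := ((KZ_K2 (3 * j + 1) hr).pow (m + 1)).quot
    obtain ⟨e3⟩ := ((caseC j).pow (m + 1)).quot
    obtain ⟨e4⟩ := TR_final j m _ hd
    exact ⟨((e1.trans e2).trans e3).trans e4⟩
  · rintro (h | h)
    · obtain ⟨j, rfl⟩ : ∃ j, k = 2 * j := ⟨k / 2, by omega⟩
      obtain rfl : r = 3 * j := by omega
      have hk : 2 * j * n / 2 = j * n := by rw [mul_assoc]; exact Nat.mul_div_cancel_left _ two_pos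
      rw [hk]
      have hd : j * n - 1 + 1 = j * n := Nat.sub_add_cancel (Nat.mul_pos (by omega) (by omega))
      obtain ⟨e1⟩ := homPlus_to_pow (3 * j) n
      obtain ⟨e2⟩ := ((KZ_K2 (3 * j) hr).pow n).quot
      obtain ⟨e3⟩ := ((caseA j).pow n).quot
      obtain ⟨e4⟩ := RR_final j n _ hd
      exact ⟨((e1.trans e2).trans e3).trans e4⟩
    · obtain ⟨j, rfl⟩ : ∃ j, k = 2 * (j + 1) := ⟨k / 2 - 1, by omega⟩
      obtain rfl : r = 3 * j + 2 := by omega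
      have hk : 2 * (j + 1) * n / 2 = (j + 1) * n := by
        rw [mul_assoc]; exact Nat.mul_div_cancel_left _ two_pos
      rw [hk]
      have hd : (j + 1) * n - 1 + 1 = (j + 1) * n := Nat.sub_add_cancel (Nat.mul_pos (by omega) (by omega))
      obtain ⟨e1⟩ := homPlus_to_pow (3 * j + 2) n
      obtain ⟨e2⟩ := ((KZ_K2 (3 * j + 2) hr).pow n).quot
      obtain ⟨e3⟩ := ((caseB j).pow n).quot
      obtain ⟨e4⟩ := RR_final (j + 1) n _ hd
      exact ⟨((e1.trans e2).trans e3).trans e4⟩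

end Lovasz
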